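/- (Kim–Lee.) As n → ∞, p_σ(n+1) = (2π/(n√23)) · I₂(4π√n/√23) + O(n^{−1/2} · I₂(2π√n/√23)); that is, the function n ↦ p_σ(n+1) − (2π/(n√23))·I₂(4π√n/√23) is big-O of n ↦ n^{−1/2}·I₂(2π√n/√23) along n → ∞. -/

import Mathlib

open Filter Asymptotics

/-- `p n` is the classical partition function: the number of partitions of `n`. -/
def p (n : ℕ) : ℕ := Fintype.card (Nat.Partition n)

/-- `pSigma n = ∑_{j ≥ 0, 23j ≤ n} p(n − 23j)·p(j)`, the Fourier coefficients in
`q·η(z)⁻¹η(23z)⁻¹ = ∑_{n≥0} pSigma(n)qⁿ`. -/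
def pSigma (n : ℕ) : ℕ := ∑ j ∈ Finset.range (n / 23 + 1), p (n - 23 * j) * p j

/-- The modified Bessel function of the first kind of order 2, defined by its convergent
power series `I₂(x) = ∑_{m=0}^{∞} (x/2)^{2m+2} / (m!·(m+2)!)`. -/
noncomputable def I2 (x : ℝ) : ℝ :=
  ∑' m : ℕ, (x / 2) ^ (2 * m + 2) / ((m.factorial : ℝ) * ((m + 2).factorial : ℝ))

section KLgen
open scoped PowerSeries.WithPiTopology

noncomputable def klGeo (i : ℕ) : PowerSeries ℕ := PowerSeries.mk fun n => if (i + 1) ∣ n then 1 else 0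

noncomputable def klA (N : ℕ) : PowerSeries ℕ := ∏ i ∈ Finset.range N, klGeo i

lemma klGeo_eq (i : ℕ) : (∑' j : ℕ, (PowerSeries.X : PowerSeries ℕ) ^ ((i + 1) * j)) = klGeo i := by
  refine HasSum.tsum_eq ?_
  rw [PowerSeries.WithPiTopology.hasSum_iff_hasSum_coeff]
  intro d
  simp only [PowerSeries.coeff_X_pow, klGeo, PowerSeries.coeff_mk]
  by_cases h : (i + 1) ∣ d
  · obtain ⟨k, rfl⟩ := h
    simp only [dvd_mul_right, if_true]
    have h2 : ∀ b, (if (i + 1) * k = (i + 1) * b then 1 else 0 : ℕ) = if b = k then 1 else 0 := by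
      intro b
      congr 1
      simp [eq_comm]
    simp only [h2]
    exact hasSum_ite_eq k (1 : ℕ)
  · simp only [h, if_false]
    have h2 : ∀ b, (if d = (i + 1) * b then 1 else 0 : ℕ) = 0 := by
      intro b
      split_ifs with hb
      · exact absurd ⟨b, hb⟩ h
      · rfl
    simp only [h2]
    exact hasSum_zero

lemma klA_tendsto (n : ℕ) : Tendsto (fun N => (klA N).coeff n) atTop (nhds (p n)) := by
  have h := Nat.Partition.hasProd_powerSeriesMk_card_restricted ℕ (fun _ => True)
  simp only [if_true, klGeo_eq] at h
  have h2 := h.tendsto_prod_nat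
  rw [PowerSeries.WithPiTopology.tendsto_iff_coeff_tendsto] at h2
  have h3 := h2 n
  simpa [klA, p, Nat.Partition.restricted] using h3

lemma klA_mono (n : ℕ) : Monotone (fun N => (klA N).coeff n) := by
  refine monotone_nat_of_le_succ fun N => ?_
  simp only [klA, Finset.prod_range_succ]
  rw [PowerSeries.coeff_mul]
  have : (n, 0) ∈ Finset.HasAntidiagonal.antidiagonal n := by simp
  refine le_trans ?_ (Finset.single_le_sum (fun _ _ => Nat.zero_le _) this)
  simp [klGeo]

lemma klA_le (N n : ℕ) : (klA N).coeff n ≤ p n :=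
  (klA_mono n).ge_of_tendsto (klA_tendsto n) N

lemma klGeo_hasSum (i : ℕ) {q : ℂ} (hq : ‖q‖ < 1) :
    HasSum (fun n => ((klGeo i).coeff n : ℂ) * q ^ n) (1 - q ^ (i + 1))⁻¹ := by
  have hq' : ‖q ^ (i + 1)‖ < 1 := by
    rw [norm_pow]; exact pow_lt_one₀ (norm_nonneg _) hq (by omega)
  have h := hasSum_geometric_of_norm_lt_one hq'
  have hinj : Function.Injective (fun j : ℕ => (i + 1) * j) :=
    fun a b hab => Nat.eq_of_mul_eq_mul_left (Nat.succ_pos i) hab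
  rw [← hinj.hasSum_iff]
  · have he : ((fun n => ((klGeo i).coeff n : ℂ) * q ^ n) ∘ fun j : ℕ => (i + 1) * j) =
        fun j => (q ^ (i + 1)) ^ j := by
      funext j
      simp [klGeo, pow_mul]
    rw [he]; exact h
  · intro x hx
    have : ¬ (i + 1) ∣ x := fun ⟨k, hk⟩ => hx ⟨k, hk.symm⟩
    simp [klGeo, this]

lemma klGeo_summable (i : ℕ) {q : ℂ} (hq : ‖q‖ < 1) :
    Summable (fun n => ‖((klGeo i).coeff n : ℂ) * q ^ n‖) := by
  refine Summable.of_nonneg_of_le (fun _ => norm_nonneg _) (fun n => ?_)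
    (summable_geometric_of_lt_one (norm_nonneg q) hq)
  rw [norm_mul, norm_pow]
  simp only [klGeo, PowerSeries.coeff_mk]
  split_ifs <;> simp

lemma kl_cauchy (f g h : ℕ → ℂ) (hf : Summable (fun n => ‖f n‖)) (hg : Summable (fun n => ‖g n‖))
    (hh : ∀ n, h n = ∑ kl ∈ Finset.HasAntidiagonal.antidiagonal n, f kl.1 * g kl.2) :
    Summable (fun n => ‖h n‖) ∧ ∑' n, h n = (∑' n, f n) * ∑' n, g n := by
  have : h = fun n => ∑ kl ∈ Finset.HasAntidiagonal.antidiagonal n, f kl.1 * g kl.2 := funext hh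
  subst this
  exact ⟨summable_norm_sum_mul_antidiagonal_of_summable_norm hf hg,
    (tsum_mul_tsum_eq_tsum_sum_antidiagonal_of_summable_norm hf hg).symm⟩

lemma klA_hasSum (N : ℕ) {q : ℂ} (hq : ‖q‖ < 1) :
    Summable (fun n => ‖((klA N).coeff n : ℂ) * q ^ n‖) ∧
    ∑' n, ((klA N).coeff n : ℂ) * q ^ n = (∏ i ∈ Finset.range N, (1 - q ^ (i + 1)))⁻¹ := by
  induction N with
  | zero =>
    have h0 : ∀ n, n ≠ 0 → ((klA 0).coeff n : ℂ) * q ^ n = 0 := by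
      intro n hn
      simp [klA, PowerSeries.coeff_one, hn]
    constructor
    · refine summable_of_ne_finset_zero (s := {0}) ?_
      intro b hb
      rw [h0 b (by simpa using hb), norm_zero]
    · rw [tsum_eq_single 0 h0]
      simp [klA]
  | succ N ih =>
    have key : ∀ n, ((klA (N+1)).coeff n : ℂ) * q ^ n =
        ∑ kl ∈ Finset.HasAntidiagonal.antidiagonal n, (((klA N).coeff kl.1 : ℂ) * q ^ kl.1) *
          (((klGeo N).coeff kl.2 : ℂ) * q ^ kl.2) := by
      intro n
      have : (klA (N+1)).coeff n = ∑ kl ∈ Finset.HasAntidiagonal.antidiagonal n, (klA N).coeff kl.1 * (klGeo N).coeff kl.2 := by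
        rw [← PowerSeries.coeff_mul, klA, Finset.prod_range_succ]; rfl
      rw [this]
      push_cast
      rw [Finset.sum_mul]
      refine Finset.sum_congr rfl fun kl hkl => ?_
      rw [Finset.HasAntidiagonal.mem_antidiagonal] at hkl
      rw [← hkl, pow_add]; ring
    have h := kl_cauchy (fun n => ((klA N).coeff n : ℂ) * q ^ n) (fun n => ((klGeo N).coeff n : ℂ) * q ^ n)
      (fun n => ((klA (N+1)).coeff n : ℂ) * q ^ n) ih.1 (klGeo_summable N hq) key
    refine ⟨h.1, h.2.trans ?_⟩
    rw [ih.2, (klGeo_hasSum N hq).tsum_eq, Finset.prod_range_succ, mul_inv]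

lemma kl_prod_tendsto {q : ℂ} (hq : ‖q‖ < 1) :
    Tendsto (fun N => (∏ i ∈ Finset.range N, (1 - q ^ (i + 1)))⁻¹) atTop
      (nhds (∏' i : ℕ, (1 - q ^ (i + 1)))⁻¹) := by
  refine Tendsto.inv₀ (ModularForm.multipliable_one_sub_pow hq).hasProd.tendsto_prod_nat ?_
  have := tprod_one_add_ne_zero_of_summable (f := fun n : ℕ => - q ^ (n + 1)) ?_ ?_
  · simpa [sub_eq_add_neg] using this
  · intro i h
    have h1 : q ^ (i + 1) = 1 := by linear_combination -h
    have h2 : ‖q ^ (i + 1)‖ < 1 := by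
      rw [norm_pow]; exact pow_lt_one₀ (norm_nonneg _) hq (by omega)
    rw [h1] at h2; simp at h2
  · simpa using! (summable_nat_add_iff 1).mpr (summable_geometric_of_lt_one (norm_nonneg _) hq)

lemma kl_p_summable {r : ℝ} (hr0 : 0 ≤ r) (hr : r < 1) : Summable (fun n => (p n : ℝ) * r ^ n) := by
  have hq : ‖(r : ℂ)‖ < 1 := by simpa [abs_of_nonneg hr0] using hr
  obtain ⟨B, hB⟩ := (kl_prod_tendsto hq).norm.bddAbove_range
  refine summable_of_sum_range_le (c := B) (fun n => by positivity) fun M => ?_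
  have hlim : Tendsto (fun N => ∑ n ∈ Finset.range M, ((klA N).coeff n : ℝ) * r ^ n) atTop
      (nhds (∑ n ∈ Finset.range M, (p n : ℝ) * r ^ n)) := by
    refine tendsto_finsetSum _ fun n _ => Tendsto.mul_const _ ?_
    exact (continuous_of_discreteTopology (f := fun k : ℕ => (k : ℝ))).continuousAt.tendsto.comp
      (klA_tendsto n)
  refine le_of_tendsto' hlim fun N => ?_
  have h1 := klA_hasSum N hq
  have hn : ∀ n, ‖((klA N).coeff n : ℂ) * (r : ℂ) ^ n‖ = ((klA N).coeff n : ℝ) * r ^ n := by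
    intro n
    rw [norm_mul, norm_pow]; simp [abs_of_nonneg hr0]
  have hs : Summable (fun n => ((klA N).coeff n : ℝ) * r ^ n) := by
    simpa only [hn] using h1.1
  have h2 : ∑' n, ((klA N).coeff n : ℝ) * r ^ n ≤ B := by
    have h3 : ((∑' n, ((klA N).coeff n : ℝ) * r ^ n : ℝ) : ℂ) =
        (∏ i ∈ Finset.range N, (1 - (r : ℂ) ^ (i + 1)))⁻¹ := by
      rw [← h1.2]; push_cast; rfl
    refine le_trans (le_abs_self _) ?_
    rw [← Real.norm_eq_abs, ← Complex.norm_real, h3]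
    exact hB ⟨N, rfl⟩
  exact le_trans (hs.sum_le_tsum _ (fun n _ => by positivity)) h2

lemma kl_p_summable_norm {q : ℂ} (hq : ‖q‖ < 1) : Summable (fun n => ‖(p n : ℂ) * q ^ n‖) := by
  simpa using kl_p_summable (norm_nonneg q) hq

lemma kl_p_tsum {q : ℂ} (hq : ‖q‖ < 1) :
    ∑' n, (p n : ℂ) * q ^ n = (∏' i : ℕ, (1 - q ^ (i + 1)))⁻¹ := by
  refine tendsto_nhds_unique ?_ (kl_prod_tendsto hq)
  have : ∀ N, (∏ i ∈ Finset.range N, (1 - q ^ (i + 1)))⁻¹ = ∑' n, ((klA N).coeff n : ℂ) * q ^ n :=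
    fun N => (klA_hasSum N hq).2.symm
  simp only [this]
  refine tendsto_tsum_of_dominated_convergence (kl_p_summable_norm hq) (fun n => ?_) ?_
  · refine Tendsto.mul_const _ ?_
    exact (continuous_of_discreteTopology (f := fun k : ℕ => (k : ℂ))).continuousAt.tendsto.comp
      (klA_tendsto n)
  · refine Eventually.of_forall fun N n => ?_
    rw [norm_mul, norm_mul]
    refine mul_le_mul_of_nonneg_right ?_ (norm_nonneg _)
    simpa using klA_le N n

noncomputable def klB (n : ℕ) : ℕ := if 23 ∣ n then p (n / 23) else 0

lemma klB_sum {q : ℂ} (hq : ‖q‖ < 1) : Summable (fun n => ‖(klB n : ℂ) * q ^ n‖) ∧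
    ∑' n, (klB n : ℂ) * q ^ n = (∏' i : ℕ, (1 - (q ^ 23) ^ (i + 1)))⁻¹ := by
  have hq' : ‖q ^ 23‖ < 1 := by
    rw [norm_pow]; exact pow_lt_one₀ (norm_nonneg _) hq (by omega)
  have hinj : Function.Injective (fun j : ℕ => 23 * j) :=
    fun a b hab => Nat.eq_of_mul_eq_mul_left (by norm_num) hab
  have hz : ∀ x, x ∉ Set.range (fun j : ℕ => 23 * j) → (klB x : ℂ) * q ^ x = 0 := by
    intro x hx
    have : ¬ 23 ∣ x := fun ⟨k, hk⟩ => hx ⟨k, hk.symm⟩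
    simp [klB, this]
  have he : ∀ j, (klB (23 * j) : ℂ) * q ^ (23 * j) = (p j : ℂ) * (q ^ 23) ^ j := by
    intro j; simp [klB, pow_mul]
  constructor
  · rw [← hinj.summable_iff]
    · simpa only [Function.comp_def, he] using kl_p_summable_norm hq'
    · intro x hx; rw [hz x hx, norm_zero]
  · rw [← kl_p_tsum hq', ← hinj.tsum_eq]
    · simp only [he]
    · intro x hx
      by_contra h
      exact hx (hz x h)

lemma kl_pSigma_eq (n : ℕ) : pSigma n = ∑ kl ∈ Finset.HasAntidiagonal.antidiagonal n, p kl.1 * klB kl.2 := by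
  rw [pSigma, Finset.Nat.sum_antidiagonal_eq_sum_range_succ_mk,
    ← Finset.sum_range_reflect (fun k => p (k, n - k).1 * klB (k, n - k).2)]
  have : ∑ j ∈ Finset.range (n + 1), p (n + 1 - 1 - j) * klB (n - (n + 1 - 1 - j)) =
      ∑ j ∈ Finset.range (n + 1), p (n - j) * klB j := by
    refine Finset.sum_congr rfl fun j hj => ?_
    have := Finset.mem_range.1 hj
    congr 2; omega
  refine Eq.trans ?_ this.symm
  refine Finset.sum_of_injOn (fun j => 23 * j) ?_ ?_ ?_ ?_
  · intro a _ b _ h; simpa using h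
  · intro j hj
    simp only [Finset.coe_range, Set.mem_Iio] at *
    omega
  · intro j hj hj2
    have : ¬ 23 ∣ j := by
      rintro ⟨k, rfl⟩
      apply hj2
      simp only [Finset.coe_range, Set.mem_image, Set.mem_Iio, Finset.mem_range] at *
      exact ⟨k, by omega, rfl⟩
    simp [klB, this]
  · intro j hj
    simp [klB]

lemma kl_pSigma_sum {q : ℂ} (hq : ‖q‖ < 1) : Summable (fun n => ‖(pSigma n : ℂ) * q ^ n‖) ∧
    ∑' n, (pSigma n : ℂ) * q ^ n =
      (∏' i : ℕ, (1 - q ^ (i + 1)))⁻¹ * (∏' i : ℕ, (1 - (q ^ 23) ^ (i + 1)))⁻¹ := by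
  have key : ∀ n, (pSigma n : ℂ) * q ^ n =
        ∑ kl ∈ Finset.HasAntidiagonal.antidiagonal n, ((p kl.1 : ℂ) * q ^ kl.1) *
          ((klB kl.2 : ℂ) * q ^ kl.2) := by
    intro n
    rw [kl_pSigma_eq]
    push_cast
    rw [Finset.sum_mul]
    refine Finset.sum_congr rfl fun kl hkl => ?_
    rw [Finset.HasAntidiagonal.mem_antidiagonal] at hkl
    rw [← hkl, pow_add]; ring
  have h := kl_cauchy (fun n => (p n : ℂ) * q ^ n) (fun n => (klB n : ℂ) * q ^ n)
      (fun n => (pSigma n : ℂ) * q ^ n) (kl_p_summable_norm hq) (klB_sum hq).1 key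
  refine ⟨h.1, h.2.trans ?_⟩
  rw [kl_p_tsum hq, (klB_sum hq).2]

end KLgen

section KLcoef
open Complex ModularForm

noncomputable def klE (z : ℂ) : ℂ := cexp (2 * Real.pi * I * z)

noncomputable def klF (z : ℂ) : ℂ := (ModularForm.eta z * ModularForm.eta (23 * z))⁻¹

lemma klE_norm (z : ℂ) : ‖klE z‖ = Real.exp (-(2 * Real.pi * z.im)) := by
  rw [klE, Complex.norm_exp]
  congr 1
  simp [Complex.mul_re, Complex.mul_im]

lemma klE_norm_lt {z : ℂ} (hz : 0 < z.im) : ‖klE z‖ < 1 := by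
  rw [klE_norm, Real.exp_lt_one_iff]
  have := Real.pi_pos
  have : 0 < 2 * Real.pi * z.im := by positivity
  linarith

lemma klE_add (z w : ℂ) : klE (z + w) = klE z * klE w := by
  simp only [klE, ← Complex.exp_add]; ring_nf

lemma klE_ne (z : ℂ) : klE z ≠ 0 := Complex.exp_ne_zero _

lemma klE_neg (z : ℂ) : klE (-z) = (klE z)⁻¹ := by
  simp only [klE, ← Complex.exp_neg]; ring_nf

lemma klE_nat (n : ℕ) (z : ℂ) : klE (n * z) = klE z ^ n := by
  simp only [klE, ← Complex.exp_nat_mul]; ring_nf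

lemma klE_cont : Continuous klE := by unfold klE; fun_prop

lemma klF_eq {z : ℂ} (hz : 0 < z.im) : klF z = klE (-z) * ∑' m, (pSigma m : ℂ) * klE z ^ m := by
  rw [(kl_pSigma_sum (klE_norm_lt hz)).2, klF, ModularForm.eta, ModularForm.eta]
  have h1 : Function.Periodic.qParam 1 z = klE z := by simp [Function.Periodic.qParam, klE]
  have h2 : Function.Periodic.qParam 1 (23 * z) = klE z ^ 23 := by
    rw [← klE_nat]; simp [Function.Periodic.qParam, klE]
  have h3 : Function.Periodic.qParam 24 z * Function.Periodic.qParam 24 (23 * z) = klE z := by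
    simp only [Function.Periodic.qParam, klE, ← Complex.exp_add]
    congr 1; push_cast; ring
  simp only [eta_q, h1, h2, klE_neg, ← h3]
  simp only [mul_inv]; ring

lemma kl_hasSum_int {ι : Type} [Countable ι] (F : ι → ℝ → ℂ) (u : ι → ℝ) (a b : ℝ)
    (hc : ∀ i, Continuous (F i)) (hu : Summable u)
    (hb : ∀ i x, ‖F i x‖ ≤ u i) :
    HasSum (fun i => ∫ x in a..b, F i x) (∫ x in a..b, ∑' i, F i x) := by
  refine intervalIntegral.hasSum_integral_of_dominated_convergence (fun i _ => u i)
    (fun i => (hc i).aestronglyMeasurable) (fun i => Eventually.of_forall fun x _ => hb i x)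
    (Eventually.of_forall fun x _ => hu) (by simp) (Eventually.of_forall fun x _ => ?_)
  exact (Summable.of_norm_bounded hu (fun i => hb i x)).hasSum

lemma kl_int_exp (k : ℤ) (y : ℝ) :
    ∫ x in (-(1/2) : ℝ)..(1/2), klE (k * (x + y * I)) = if k = 0 then 1 else 0 := by
  split_ifs with h
  · subst h; simp [klE]; norm_num
  · have hc : (2 * Real.pi * I * k : ℂ) ≠ 0 := by
      have : (k : ℂ) ≠ 0 := by exact_mod_cast h
      have : (Real.pi : ℂ) ≠ 0 := by exact_mod_cast Real.pi_ne_zero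
      simp [*]
    have h1 : ∀ x : ℝ, klE (k * (x + y * I)) = klE (k * (y * I)) * cexp ((2 * Real.pi * I * k) * x) := by
      intro x
      simp only [klE, ← Complex.exp_add]; ring_nf
    simp only [h1]
    rw [intervalIntegral.integral_const_mul, integral_exp_mul_complex hc]
    have h2 : cexp (2 * Real.pi * I * k * ((1/2 : ℝ) : ℂ)) =
        cexp (2 * Real.pi * I * k * ((-(1/2) : ℝ) : ℂ)) := by
      rw [Complex.exp_eq_exp_iff_exists_int]
      exact ⟨k, by push_cast; ring⟩
    rw [h2]; simp

lemma kl_coeff (n : ℕ) {y : ℝ} (hy : 0 < y) :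
    ∫ x in (-(1/2) : ℝ)..(1/2), klF (x + y * I) * klE (-(n * (x + y * I))) = pSigma (n + 1) := by
  have him : ∀ x : ℝ, ((x : ℂ) + y * I).im = y := by intro x; simp
  have hF : ∀ x : ℝ, klF (x + y * I) * klE (-(n * (x + y * I))) =
      ∑' m : ℕ, (pSigma m : ℂ) * klE (((m : ℤ) - 1 - n : ℤ) * (x + y * I)) := by
    intro x
    rw [klF_eq (by rw [him]; exact hy), mul_right_comm, ← tsum_mul_left]
    refine tsum_congr fun m => ?_
    rw [← klE_nat, mul_comm (pSigma m : ℂ), ← mul_assoc, ← klE_add, ← klE_add, mul_comm]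
    congr 2; push_cast; ring
  simp only [hF]
  have hsum := kl_hasSum_int (fun (m : ℕ) (x : ℝ) => (pSigma m : ℂ) * klE (((m : ℤ) - 1 - n : ℤ) * (x + y * I)))
    (fun m => ‖(pSigma m : ℂ) * klE (y * I) ^ m‖ * ‖klE (-((1 + n) * (y * I)))‖) (-(1/2)) (1/2)
    (fun m => by
      refine continuous_const.mul (klE_cont.comp ?_)
      fun_prop)
    ((kl_pSigma_sum (klE_norm_lt (z := y * I) (by simpa using hy))).1.mul_right _)
    (fun m x => by
      rw [norm_mul, norm_mul, mul_assoc, ← norm_mul (klE (y * I) ^ m), ← klE_nat, ← klE_add, klE_norm, klE_norm]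
      apply le_of_eq
      congr 3
      simp
      ring)
  rw [← hsum.tsum_eq]
  simp only [intervalIntegral.integral_const_mul, kl_int_exp]
  rw [tsum_eq_single (n + 1)]
  · simp
  · intro m hm
    rw [if_neg (by omega), mul_zero]

lemma kl_near : ∃ C : ℝ, 0 < C ∧ ∀ w : ℂ, 3 / 4 ≤ w.im → ‖klF w - klE (-w)‖ ≤ C := by
  set r : ℝ := ‖klE ((3/4 : ℝ) * I)‖ with hr
  have hr1 : r < 1 := klE_norm_lt (by simp)
  have hs := (kl_pSigma_sum (q := (r : ℂ)) (by rw [Complex.norm_real, Real.norm_eq_abs, abs_of_nonneg (norm_nonneg _)]; exact hr1)).1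
  have hr0 : 0 < r := norm_pos_iff.2 (klE_ne _)
  have hs' : Summable fun m : ℕ => (pSigma (m + 1) : ℝ) * r ^ m := by
    have h2 := ((summable_nat_add_iff 1).2 hs).mul_right r⁻¹
    refine h2.congr fun m => ?_
    rw [norm_mul, norm_pow]
    simp only [Complex.norm_natCast, Complex.norm_real, Real.norm_eq_abs, abs_of_pos hr0]
    rw [pow_succ]; field_simp
  refine ⟨1 + ∑' m : ℕ, (pSigma (m + 1) : ℝ) * r ^ m, ?_, fun w hw => ?_⟩
  · have : 0 ≤ ∑' m : ℕ, (pSigma (m + 1) : ℝ) * r ^ m := tsum_nonneg fun m => by positivity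
    linarith
  have hw0 : 0 < w.im := by linarith
  have hsw := (kl_pSigma_sum (klE_norm_lt hw0)).1
  have hqr : ‖klE w‖ ≤ r := by
    rw [hr, klE_norm, klE_norm, Real.exp_le_exp]
    have := Real.pi_pos
    simp
    nlinarith
  have hps : pSigma 0 = 1 := by simp [pSigma, p]
  have heq : klF w - klE (-w) = ∑' m : ℕ, (pSigma (m + 1) : ℂ) * klE w ^ m := by
    rw [klF_eq hw0, hsw.of_norm.tsum_eq_zero_add, hps, mul_add, ← tsum_mul_left]
    simp only [Nat.cast_one, pow_zero, mul_one, add_sub_cancel_left]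
    refine tsum_congr fun m => ?_
    rw [klE_neg, pow_succ]
    field_simp [klE_ne w]
  rw [heq]
  refine le_trans (tsum_of_norm_bounded hs'.hasSum fun m => ?_) (by linarith)
  rw [norm_mul, norm_pow]
  simp only [Complex.norm_natCast]
  gcongr

lemma kl_fricke {z : ℂ} (hz : 0 < z.im) :
    klF z = -I * (Real.sqrt 23 : ℝ) * z * klF (-1 / (23 * z)) := by
  have hz0 : z ≠ 0 := by rintro rfl; simp at hz
  have h23 : 0 < (23 * z).im := by simpa using hz
  have e1 : ModularForm.eta (-1 / (23 * z)) = (sqrt I)⁻¹ * (sqrt (23 * z) * ModularForm.eta (23 * z)) := by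
    simpa using! eta_comp_eq_csqrt_I_inv (show (23 * z) ∈ UpperHalfPlane.upperHalfPlaneSet from h23)
  have e2 : ModularForm.eta (23 * (-1 / (23 * z))) = (sqrt I)⁻¹ * (sqrt z * ModularForm.eta z) := by
    have : 23 * (-1 / (23 * z)) = -1 / z := by field_simp
    rw [this]
    simpa using! eta_comp_eq_csqrt_I_inv (show z ∈ UpperHalfPlane.upperHalfPlaneSet from hz)
  have hsq : ∀ w : ℂ, w ≠ 0 → sqrt w * sqrt w = w := by
    intro w hw
    rw [Complex.sqrt, ← Complex.cpow_add _ _ hw]; norm_num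
  have h3 : sqrt (23 * z) = (Real.sqrt 23 : ℝ) * sqrt z := by
    have : (23 * z) = ((23 : ℝ) : ℂ) * z := by norm_num
    rw [this, sqrt_eq_exp hz0, sqrt_eq_exp (by simp [hz0]), Complex.log_ofReal_mul (by norm_num) hz0,
      Real.sqrt_eq_rpow, Real.rpow_def_of_pos (by norm_num), Complex.ofReal_exp, ← Complex.exp_add]
    congr 1; push_cast; ring
  have hprod : ModularForm.eta (-1 / (23 * z)) * ModularForm.eta (23 * (-1 / (23 * z))) =
      (-I * (Real.sqrt 23 : ℝ) * z) * (ModularForm.eta z * ModularForm.eta (23 * z)) := by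
    rw [e1, e2, h3]
    have hI : (sqrt I)⁻¹ * (sqrt I)⁻¹ = -I := by
      rw [← mul_inv, hsq I I_ne_zero, inv_I]
    calc _ = ((sqrt I)⁻¹ * (sqrt I)⁻¹) * (Real.sqrt 23 : ℝ) * (sqrt z * sqrt z) * (ModularForm.eta z * ModularForm.eta (23 * z)) := by ring
      _ = _ := by rw [hI, hsq z hz0]
  have hne : (-I * (Real.sqrt 23 : ℝ) * z) ≠ 0 := by
    have : Real.sqrt 23 ≠ 0 := by positivity
    simp [hz0, this]
  rw [klF, klF, hprod, mul_inv (-I * (Real.sqrt 23 : ℝ) * z), ← mul_assoc (-I * (Real.sqrt 23 : ℝ) * z), mul_inv_cancel₀ hne, one_mul]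

end KLcoef

section KLbessel
open Complex

lemma kl_int_circ (j : ℤ) :
    ∫ x in (0 : ℝ)..(2 * Real.pi), cexp (j * (x * I)) = if j = 0 then 2 * (Real.pi : ℂ) else 0 := by
  split_ifs with h
  · subst h; simp
  · have hc : ((j : ℂ) * I) ≠ 0 := by
      have : (j : ℂ) ≠ 0 := by exact_mod_cast h
      simp [this]
    have h1 : ∀ x : ℝ, cexp (j * (x * I)) = cexp ((j * I) * x) := by
      intro x; ring_nf
    simp only [h1]
    rw [integral_exp_mul_complex hc]
    have h2 : cexp (j * I * ((2 * Real.pi : ℝ) : ℂ)) = cexp (j * I * ((0 : ℝ) : ℂ)) := by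
      rw [Complex.exp_eq_exp_iff_exists_int]
      exact ⟨j, by push_cast; ring⟩
    rw [h2]; simp

lemma klJ (a b : ℂ) {R : ℝ} (hR : 0 < R) :
    ∫ θ in (0 : ℝ)..(2 * Real.pi), (R * cexp (θ * I)) ^ 2 *
      cexp (b * (R * cexp (θ * I)) + a / (R * cexp (θ * I))) =
    2 * Real.pi * ∑' m : ℕ, b ^ m * a ^ (m + 2) / (m.factorial * (m + 2).factorial) := by
  have hR' : (R : ℂ) ≠ 0 := by exact_mod_cast hR.ne'
  set u : ℕ × ℕ → ℂ := fun x => R ^ 2 * (((b * R) ^ x.1 / x.1.factorial) * ((a / R) ^ x.2 / x.2.factorial)) with hu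
  have hterm : ∀ (x : ℕ × ℕ) (θ : ℝ), u x * cexp (((x.1 : ℤ) - x.2 + 2 : ℤ) * (θ * I)) =
      (R * cexp (θ * I)) ^ 2 * (((b * (R * cexp (θ * I))) ^ x.1 / x.1.factorial) *
        ((a / (R * cexp (θ * I))) ^ x.2 / x.2.factorial)) := by
    intro x θ
    have : cexp (((x.1 : ℤ) - x.2 + 2 : ℤ) * (θ * I)) =
        cexp (θ * I) ^ 2 * cexp (θ * I) ^ x.1 * (cexp (θ * I))⁻¹ ^ x.2 := by
      rw [← Complex.exp_neg, ← Complex.exp_nat_mul, ← Complex.exp_nat_mul, ← Complex.exp_nat_mul,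
        ← Complex.exp_add, ← Complex.exp_add]
      congr 1; push_cast; ring
    rw [this, hu]
    simp only [mul_pow, div_pow, inv_pow]
    field_simp
  have hsn : ∀ c : ℂ, Summable fun m : ℕ => ‖c ^ m / m.factorial‖ := by
    intro c
    simpa using NormedSpace.norm_expSeries_div_summable (𝔸 := ℂ) c
  have hexp : ∀ c : ℂ, cexp c = ∑' m : ℕ, c ^ m / m.factorial := by
    intro c
    rw [Complex.exp_eq_exp_ℂ, NormedSpace.exp_eq_tsum_div]
  have hF : ∀ θ : ℝ, (R * cexp (θ * I)) ^ 2 *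
      cexp (b * (R * cexp (θ * I)) + a / (R * cexp (θ * I))) =
      ∑' x : ℕ × ℕ, u x * cexp (((x.1 : ℤ) - x.2 + 2 : ℤ) * (θ * I)) := by
    intro θ
    simp only [hterm]
    generalize R * cexp (θ * I) = w
    rw [tsum_mul_left, Complex.exp_add, hexp (b * w), hexp (a / w), tsum_mul_tsum_of_summable_norm (hsn _) (hsn _)]
  simp only [hF]
  have hus : Summable (fun x => ‖u x‖) := by
    have := (summable_mul_of_summable_norm (hsn (b * R)) (hsn (a / R))).norm
    simp only [hu, norm_mul (_ ^ 2 : ℂ)]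
    exact this.mul_left _
  have hsum := kl_hasSum_int (fun (x : ℕ × ℕ) (θ : ℝ) => u x * cexp (((x.1 : ℤ) - x.2 + 2 : ℤ) * (θ * I)))
    (fun x => ‖u x‖) 0 (2 * Real.pi) (fun x => by fun_prop) hus (fun x θ => by
      rw [norm_mul]
      apply le_of_eq
      have : cexp (((x.1 : ℤ) - x.2 + 2 : ℤ) * (θ * I)) = cexp (((((x.1 : ℤ) - x.2 + 2 : ℤ) : ℝ) * θ : ℝ) * I) := by
        congr 1; push_cast; ring
      rw [this, Complex.norm_exp_ofReal_mul_I, mul_one])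
  rw [← hsum.tsum_eq]
  simp only [intervalIntegral.integral_const_mul, kl_int_circ]
  have hinj : Function.Injective (fun m : ℕ => (m, m + 2)) := fun x y h => (Prod.ext_iff.1 h).1
  rw [← hinj.tsum_eq, ← tsum_mul_left]
  · refine tsum_congr fun m => ?_
    rw [if_pos (by push_cast; ring)]
    simp only [hu, mul_pow, div_pow, pow_add]
    field_simp
  · intro x hx
    by_contra h
    apply hx
    simp only
    rw [if_neg, mul_zero]
    intro h2
    apply h
    exact ⟨x.1, Prod.ext rfl (by simp only; omega)⟩

lemma kl_I2_int (x : ℝ) :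
    ∫ θ in (0 : ℝ)..(2 * Real.pi), Real.cos (2 * θ) * Real.exp (x * Real.cos θ) = 2 * Real.pi * I2 x := by
  have h := klJ (x / 2) (x / 2) one_pos
  have h1 : ∑' m : ℕ, ((x : ℂ) / 2) ^ m * (x / 2) ^ (m + 2) / (m.factorial * (m + 2).factorial) = (I2 x : ℂ) := by
    rw [I2]; push_cast
    refine tsum_congr fun m => ?_
    rw [← pow_add]; congr 2; ring
  rw [h1] at h
  have h2 : ∀ θ : ℝ, (((1 : ℝ) : ℂ) * cexp (θ * I)) ^ 2 *
      cexp (x / 2 * (((1 : ℝ) : ℂ) * cexp (θ * I)) + x / 2 / (((1 : ℝ) : ℂ) * cexp (θ * I))) =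
      cexp ((2 * θ : ℝ) * I) * ((Real.exp (x * Real.cos θ) : ℝ) : ℂ) := by
    intro θ
    congr 1
    · rw [Complex.ofReal_one, one_mul, ← Complex.exp_nat_mul]; congr 1; push_cast; ring
    · rw [Complex.ofReal_one, one_mul, Complex.ofReal_exp, div_eq_mul_inv (x / 2 : ℂ) (cexp _), ← Complex.exp_neg]
      congr 1
      push_cast
      rw [Complex.cos]; ring_nf
  simp only [h2] at h
  have h3 := congrArg Complex.re h
  have hint : IntervalIntegrable (fun θ : ℝ => cexp ((2 * θ : ℝ) * I) * ((Real.exp (x * Real.cos θ) : ℝ) : ℂ))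
      MeasureTheory.volume 0 (2 * Real.pi) := by
    apply Continuous.intervalIntegrable
    fun_prop
  have h4 := Complex.reCLM.intervalIntegral_comp_comm hint
  simp only [Complex.reCLM_apply] at h4
  rw [h3] at h4
  have h5 : ∀ θ : ℝ, (cexp ((2 * θ : ℝ) * I) * ((Real.exp (x * Real.cos θ) : ℝ) : ℂ)).re =
      Real.cos (2 * θ) * Real.exp (x * Real.cos θ) := by
    intro θ
    rw [Complex.re_mul_ofReal, Complex.exp_ofReal_mul_I_re]
  simp only [h5] at h4
  rw [h4]
  norm_cast

lemma kl_I2_lower : ∃ c : ℝ, 0 < c ∧ ∀ᶠ x : ℝ in atTop, c * (Real.exp x / Real.sqrt x) ≤ I2 x := by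
  refine ⟨1 / (16 * Real.pi), by have := Real.pi_pos; positivity, ?_⟩
  have hlim : Tendsto (fun x : ℝ => x ^ (1/2 : ℝ) * Real.exp (-(1/4) * x)) atTop (nhds 0) :=
    tendsto_rpow_mul_exp_neg_mul_atTop_nhds_zero _ _ (by norm_num)
  have hev := hlim.eventually (gt_mem_nhds (show (0 : ℝ) < 1 / (80 * Real.pi) by have := Real.pi_pos; positivity))
  filter_upwards [hev, eventually_ge_atTop 1] with x hx hx1
  have hpi := Real.pi_gt_three
  have hsx : 1 ≤ Real.sqrt x := by rw [Real.one_le_sqrt]; exact hx1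
  have hsx0 : 0 < Real.sqrt x := by linarith
  have hsq : Real.sqrt x * Real.sqrt x = x := Real.mul_self_sqrt (by linarith)
  set f : ℝ → ℝ := fun θ => Real.cos (2 * θ) * Real.exp (x * Real.cos θ) with hf
  have hfc : Continuous f := by fun_prop
  have hper : Function.Periodic f (2 * Real.pi) := by
    intro θ
    simp only [hf]
    rw [Real.cos_add_two_pi, mul_add, show 2 * (2 * Real.pi) = (2 : ℕ) * (2 * Real.pi) by norm_num,
      Real.cos_add_nat_mul_two_pi]
  have hI : ∫ θ in (-Real.pi)..Real.pi, f θ = 2 * Real.pi * I2 x := by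
    rw [← kl_I2_int x]
    have := hper.intervalIntegral_add_eq (-Real.pi) 0
    rw [show -Real.pi + 2 * Real.pi = Real.pi by ring, zero_add] at this
    exact this
  set δ : ℝ := 1 / (2 * Real.sqrt x) with hδ
  have hδ0 : 0 < δ := by positivity
  have hδ1 : δ ≤ 1 / 2 := by
    rw [hδ]; apply one_div_le_one_div_of_le <;> linarith
  have hδx : δ ^ 2 * x = 1 / 4 := by
    rw [hδ]; nth_rewrite 2 [← hsq]; field_simp; norm_num
  have hlow : ∀ θ, -Real.exp (3 / 4 * x) ≤ f θ := by
    intro θ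
    simp only [hf]
    by_cases hc : 0 ≤ Real.cos (2 * θ)
    · have := Real.exp_pos (3 / 4 * x)
      have := mul_nonneg hc (Real.exp_pos (x * Real.cos θ)).le
      linarith
    · push Not at hc
      have h1 : Real.cos θ ≤ 3 / 4 := by
        rw [Real.cos_two_mul] at hc
        nlinarith
      have h2 : Real.exp (x * Real.cos θ) ≤ Real.exp (3 / 4 * x) := by
        apply Real.exp_le_exp.2; nlinarith
      have h3 := Real.neg_one_le_cos (2 * θ)
      have := Real.exp_pos (x * Real.cos θ)
      nlinarith
  have hmid : ∀ θ ∈ Set.Icc (-δ) δ, 1 / 4 * Real.exp x ≤ f θ := by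
    intro θ hθ
    have hθ2 : θ ^ 2 ≤ δ ^ 2 := sq_le_sq' hθ.1 hθ.2
    have hδ2 : δ ^ 2 ≤ 1 / 4 := by nlinarith
    have h1 : 1 / 2 ≤ Real.cos (2 * θ) := by
      have := Real.one_sub_sq_div_two_le_cos (x := 2 * θ)
      nlinarith
    have h2 : x - 1 / 8 ≤ x * Real.cos θ := by
      have := Real.one_sub_sq_div_two_le_cos (x := θ)
      nlinarith
    have h3 : 1 / 2 * Real.exp x ≤ Real.exp (x * Real.cos θ) := by
      refine le_trans ?_ (Real.exp_le_exp.2 h2)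
      rw [sub_eq_add_neg, Real.exp_add, mul_comm]
      have := Real.add_one_le_exp (-(1 / 8 : ℝ))
      gcongr; linarith
    simp only [hf]
    have := Real.exp_pos x
    nlinarith
  have hint : ∀ a b : ℝ, IntervalIntegrable f MeasureTheory.volume a b := fun a b => hfc.intervalIntegrable a b
  have e1 : ∫ θ in (-Real.pi)..Real.pi, f θ =
      (∫ θ in (-Real.pi)..(-δ), f θ) + (∫ θ in (-δ)..δ, f θ) + ∫ θ in δ..Real.pi, f θ := by
    rw [intervalIntegral.integral_add_adjacent_intervals (hint _ _) (hint _ _),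
      intervalIntegral.integral_add_adjacent_intervals (hint _ _) (hint _ _)]
  have b1 : (Real.pi - δ) * (-Real.exp (3 / 4 * x)) ≤ ∫ θ in (-Real.pi)..(-δ), f θ := by
    have := intervalIntegral.integral_mono_on (a := -Real.pi) (b := -δ) (by linarith)
      (intervalIntegrable_const (c := -Real.exp (3 / 4 * x))) (hint _ _) (fun θ _ => hlow θ)
    rw [intervalIntegral.integral_const, smul_eq_mul] at this
    linarith
  have b3 : (Real.pi - δ) * (-Real.exp (3 / 4 * x)) ≤ ∫ θ in δ..Real.pi, f θ := by
    have := intervalIntegral.integral_mono_on (a := δ) (b := Real.pi) (by linarith)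
      (intervalIntegrable_const (c := -Real.exp (3 / 4 * x))) (hint _ _) (fun θ _ => hlow θ)
    rw [intervalIntegral.integral_const, smul_eq_mul] at this
    linarith
  have b2 : (2 * δ) * (1 / 4 * Real.exp x) ≤ ∫ θ in (-δ)..δ, f θ := by
    have := intervalIntegral.integral_mono_on (a := -δ) (b := δ) (by linarith)
      (intervalIntegrable_const (c := 1 / 4 * Real.exp x)) (hint _ _) hmid
    rw [intervalIntegral.integral_const, smul_eq_mul] at this
    linarith
  have hsmall : Real.exp (3 / 4 * x) ≤ 1 / (80 * Real.pi) * (Real.exp x / Real.sqrt x) := by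
    rw [← Real.sqrt_eq_rpow] at hx
    have : Real.exp (3 / 4 * x) = Real.exp x * Real.exp (-(1/4) * x) := by
      rw [← Real.exp_add]; congr 1; ring
    rw [this, ← mul_div_assoc, le_div_iff₀ hsx0]
    have := Real.exp_pos x
    nlinarith
  have hδe : 2 * δ * (1 / 4 * Real.exp x) = 1 / 4 * (Real.exp x / Real.sqrt x) := by
    rw [hδ]; field_simp
  have hE : 0 < Real.exp x / Real.sqrt x := by positivity
  set Q := Real.exp x / Real.sqrt x
  have h80 : 2 * Real.pi * Real.exp (3 / 4 * x) ≤ 1 / 40 * Q := by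
    calc _ ≤ 2 * Real.pi * (1 / (80 * Real.pi) * Q) := by gcongr
      _ = 1 / 40 * Q := by field_simp; norm_num
  have hexp := Real.exp_pos (3 / 4 * x)
  have hfin : 1 / 8 * Q ≤ 2 * Real.pi * I2 x := by
    rw [← hI, e1]; nlinarith
  have : 1 / (16 * Real.pi) * Q = 1 / (2 * Real.pi) * (1 / 8 * Q) := by field_simp; norm_num
  rw [this]
  calc _ ≤ 1 / (2 * Real.pi) * (2 * Real.pi * I2 x) := by gcongr
    _ = I2 x := by field_simp

end KLbessel

section KLmain
open Complex

noncomputable def klG (z : ℂ) : ℂ := -I * (Real.sqrt 23 : ℝ) * z * klE (1 / (23 * z))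

lemma klG_mul (n : ℕ) {z : ℂ} (hz : z ≠ 0) : klG z * klE (-(n * z)) * (I * z) =
    (Real.sqrt 23 : ℝ) * (z ^ 2 * cexp ((-(2 * Real.pi * I * n)) * z + (2 * Real.pi * I / 23) / z)) := by
  have : cexp ((-(2 * Real.pi * I * n)) * z + (2 * Real.pi * I / 23) / z) = klE (1 / (23 * z)) * klE (-(n * z)) := by
    rw [← klE_add, klE]; congr 1; field_simp; ring
  rw [this, klG]
  linear_combination (-(Real.sqrt 23 : ℂ) * z ^ 2 * klE (1 / (23 * z)) * klE (-(n * z))) * I_sq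

lemma klG_norm (z : ℂ) : ‖klG z‖ = Real.sqrt 23 * ‖z‖ * Real.exp (2 * Real.pi / 23 * (z.im / normSq z)) := by
  rw [klG, norm_mul, klE_norm]
  congr 1
  · simp [abs_of_nonneg (Real.sqrt_nonneg 23)]
  · congr 1
    have : (1 / (23 * z)).im = - (z.im / normSq z) / 23 := by
      rw [show 1 / (23 * z) = ((1 / 23 : ℝ) : ℂ) * z⁻¹ by push_cast; rw [one_div, mul_inv]; ring, Complex.re_ofReal_mul |> fun _ => Complex.im_ofReal_mul, Complex.inv_im]; ring
    rw [this]; ring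

lemma kl_main_sum (n : ℕ) (hn : 1 ≤ n) :
    (Real.sqrt 23 : ℝ) * (2 * Real.pi * ∑' m : ℕ, (-(2 * Real.pi * I * n)) ^ m * (2 * Real.pi * I / 23) ^ (m + 2) / (m.factorial * (m + 2).factorial) : ℂ)
     = -((2 * Real.pi / ((n : ℝ) * Real.sqrt 23) * I2 (4 * Real.pi * Real.sqrt n / Real.sqrt 23) : ℝ) : ℂ) := by
  have hn0 : (n : ℂ) ≠ 0 := by exact_mod_cast (by omega : n ≠ 0)
  have h1 : ∀ m : ℕ, (-(2 * Real.pi * I * n)) ^ m * (2 * Real.pi * I / 23) ^ (m + 2) / (m.factorial * (m + 2).factorial)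
     = -(1 / (23 * n) : ℂ) * (((4 * Real.pi * Real.sqrt n / Real.sqrt 23 / 2) ^ (2 * m + 2) / ((m.factorial : ℝ) * ((m + 2).factorial : ℝ)) : ℝ) : ℂ) := by
    intro m
    have h2 : (4 * Real.pi * Real.sqrt n / Real.sqrt 23 / 2) ^ (2 * m + 2) = (4 * Real.pi ^ 2 * n / 23) ^ (m + 1) := by
      rw [show 2 * m + 2 = 2 * (m + 1) by ring, pow_mul]
      congr 1
      rw [div_pow, div_pow, mul_pow, mul_pow, Real.sq_sqrt (by positivity), Real.sq_sqrt (by positivity)]; ring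
    rw [h2]; push_cast
    have h3 : (-(2 * Real.pi * I * n) : ℂ) ^ m * (2 * Real.pi * I / 23) ^ (m + 2) =
        -(1 / (23 * n) : ℂ) * (4 * Real.pi ^ 2 * n / 23) ^ (m + 1) := by
      have h4 : (4 * Real.pi ^ 2 * n / 23 : ℂ) = (-(2 * Real.pi * I * n)) * (2 * Real.pi * I / 23) := by
        linear_combination (4 * Real.pi ^ 2 * n / 23 : ℂ) * I_sq
      rw [h4, mul_pow, pow_succ, pow_succ, pow_succ]
      field_simp
    rw [h3]; ring
  simp only [h1]
  rw [tsum_mul_left, ← Complex.ofReal_tsum]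
  rw [I2]
  set S := ∑' m : ℕ, (4 * Real.pi * Real.sqrt n / Real.sqrt 23 / 2) ^ (2 * m + 2) / ((m.factorial : ℝ) * ((m + 2).factorial : ℝ))
  have h23 : ((Real.sqrt 23 : ℝ) : ℂ) ^ 2 = 23 := by
    norm_cast; rw [Real.sq_sqrt (by norm_num)]; 
  have h23' : ((Real.sqrt 23 : ℝ) : ℂ) ≠ 0 := by
    intro h; rw [h] at h23; norm_num at h23
  push_cast
  field_simp
  rw [h23]; 

lemma kl_main : ∃ C : ℝ, 0 < C ∧ ∀ n : ℕ, 1 ≤ n → ∀ y : ℝ, 0 < y → y ≤ 1 →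
    ‖(∫ x in (-(1/2):ℝ)..(1/2), klG (x + y * I) * klE (-(n * (x + y * I)))) -
      ((2 * Real.pi / ((n : ℝ) * Real.sqrt 23) * I2 (4 * Real.pi * Real.sqrt n / Real.sqrt 23) : ℝ) : ℂ)‖
      ≤ C * Real.exp (2 * Real.pi * n * y) := by
  have hpi := Real.pi_pos
  refine ⟨Real.sqrt 23 * (5 / 4) * Real.exp (8 * Real.pi / 23) * (2 * Real.pi), by positivity, ?_⟩
  intro n hn y hy hy1
  set h : ℂ → ℂ := fun z => klG z * klE (-(n * z)) with hh
  set z0 : ℂ := (1 / 2 : ℝ) + y * I with hz0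
  have hz0re : z0.re = 1 / 2 := by simp [hz0]
  have hz0im : z0.im = y := by simp [hz0]
  set R : ℝ := ‖z0‖ with hR
  have hR2 : R ^ 2 = 1 / 4 + y ^ 2 := by
    rw [hR, ← Complex.normSq_eq_norm_sq, Complex.normSq_apply, hz0re, hz0im]; ring
  have hR0 : 0 < R := by
    rw [hR, norm_pos_iff]; intro h0; rw [h0] at hz0im; simp at hz0im; linarith
  set t : ℝ := arg z0 with ht
  have ht0 : 0 ≤ t := by rw [ht, Complex.arg_nonneg_iff]; linarith
  have ht1 : t < Real.pi / 2 := by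
    have := (Complex.abs_arg_lt_pi_div_two_iff (z := z0)).2 (Or.inl (by rw [hz0re]; norm_num))
    exact (abs_lt.1 this).2
  have hzt : (R : ℂ) * cexp (t * I) = z0 := Complex.norm_mul_exp_arg_mul_I z0
  have him : ∀ θ : ℝ, ((R : ℂ) * cexp (θ * I)).im = R * Real.sin θ := by
    intro θ; rw [Complex.im_ofReal_mul, Complex.exp_ofReal_mul_I_im]
  have hre : ∀ θ : ℝ, ((R : ℂ) * cexp (θ * I)).re = R * Real.cos θ := by
    intro θ; rw [Complex.re_ofReal_mul, Complex.exp_ofReal_mul_I_re]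
  have hsin : R * Real.sin t = y := by rw [← him, hzt, hz0im]
  have hcos : R * Real.cos t = 1 / 2 := by rw [← hre, hzt, hz0re]
  have hz1 : (R : ℂ) * cexp ((Real.pi - t : ℝ) * I) = (-(1 / 2) : ℝ) + y * I := by
    apply Complex.ext
    · rw [hre, Real.cos_pi_sub]; simp; linarith
    · rw [him, Real.sin_pi_sub]; simp; linarith
  have hcne : ∀ θ : ℝ, (R : ℂ) * cexp (θ * I) ≠ 0 := by
    intro θ
    exact mul_ne_zero (by exact_mod_cast hR0.ne') (Complex.exp_ne_zero _)
  have hcnorm : ∀ θ : ℝ, ‖(R : ℂ) * cexp (θ * I)‖ = R := by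
    intro θ
    rw [norm_mul, Complex.norm_exp_ofReal_mul_I, mul_one, Complex.norm_real, Real.norm_of_nonneg hR0.le]
  set T : ℝ := R ^ 2 / y with hT
  have hT0 : 0 < T := by positivity
  have hball : ∀ z : ℂ, ‖z‖ ^ 2 < 2 * T * z.im → z ∈ Metric.ball ((T : ℂ) * I) T := by
    intro z hz
    rw [Metric.mem_ball, dist_eq_norm]
    apply lt_of_pow_lt_pow_left₀ 2 hT0.le
    rw [← Complex.normSq_eq_norm_sq, Complex.normSq_apply] at hz ⊢
    simp
    nlinarith
  have hne : ∀ z ∈ Metric.ball ((T : ℂ) * I) T, z ≠ 0 := by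
    rintro z hz rfl
    rw [Metric.mem_ball, dist_eq_norm] at hz
    simp [abs_of_pos hT0] at hz
  have hd : ∀ z : ℂ, z ≠ 0 → DifferentiableAt ℂ h z := by
    intro z hz
    simp only [hh, klG, klE]
    have : (23 : ℂ) * z ≠ 0 := by simp [hz]
    fun_prop (disch := assumption)
  have hex : DifferentiableOn ℂ h (Metric.ball ((T : ℂ) * I) T) := fun z hz =>
    (hd z (hne z hz)).differentiableWithinAt
  obtain ⟨H, hH⟩ := hex.isExactOn_ball
  have hcont : Continuous (fun θ : ℝ => h (R * cexp (θ * I)) * (I * (R * cexp (θ * I)))) := by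
    rw [continuous_iff_continuousAt]
    intro θ
    have h1 : ContinuousAt h (R * cexp (θ * I)) := (hd _ (hcne θ)).continuousAt
    have h2 : ContinuousAt (fun θ : ℝ => (R : ℂ) * cexp (θ * I)) θ := by fun_prop
    exact (ContinuousAt.comp (f := fun θ : ℝ => (R : ℂ) * cexp (θ * I)) h1 h2).mul (by fun_prop)
  set k : ℝ → ℂ := fun θ : ℝ => h (R * cexp (θ * I)) * (I * (R * cexp (θ * I))) with hk
  have hline : ∀ x ∈ Set.uIcc (-(1/2) : ℝ) (1/2), ((x : ℂ) + y * I) ∈ Metric.ball ((T : ℂ) * I) T := by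
    intro x hx
    rw [Set.uIcc_of_le (by norm_num)] at hx
    apply hball
    rw [← Complex.normSq_eq_norm_sq, Complex.normSq_apply]
    simp
    have : 2 * T * y = 2 * R ^ 2 := by rw [hT]; field_simp
    rw [this, hR2]
    nlinarith [hx.1, hx.2, mul_pos hy hy]
  have hseg : ∫ x in (-(1/2):ℝ)..(1/2), h (x + y * I) = H ((1 / 2 : ℝ) + y * I) - H ((-(1 / 2) : ℝ) + y * I) := by
    apply intervalIntegral.integral_eq_sub_of_hasDerivAt (f := fun x : ℝ => H (x + y * I))
    · intro x hx
      have h1 := hH _ (hline x hx)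
      have h2 : HasDerivAt (fun x : ℝ => (x : ℂ) + y * I) 1 x := (Complex.ofRealCLM.hasDerivAt (x := x)).add_const _ |>.congr_deriv (by simp)
      exact (HasDerivAt.comp x h1 h2).congr_deriv (by rw [mul_one])
    · apply ContinuousOn.intervalIntegrable
      intro x hx
      have h1 := (hd _ (hne _ (hline x hx))).continuousAt
      exact (ContinuousAt.comp (f := fun x : ℝ => (x : ℂ) + y * I) h1 (by fun_prop)).continuousWithinAt
  have harc : ∫ θ in t..(Real.pi - t), k θ = H ((-(1 / 2) : ℝ) + y * I) - H ((1 / 2 : ℝ) + y * I) := by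
    rw [← hz1, ← hz0, ← hzt]
    apply intervalIntegral.integral_eq_sub_of_hasDerivAt (f := fun θ : ℝ => H (R * cexp (θ * I)))
    · intro θ hθ
      rw [Set.uIcc_of_le (by linarith)] at hθ
      have hmem : (R : ℂ) * cexp (θ * I) ∈ Metric.ball ((T : ℂ) * I) T := by
        apply hball
        rw [hcnorm, him]
        have h3 : 0 ≤ Real.sin θ - Real.sin t := by
          rw [Real.sin_sub_sin]
          have := Real.sin_nonneg_of_nonneg_of_le_pi (x := (θ - t) / 2) (by linarith [hθ.1]) (by linarith [hθ.2])
          have := Real.cos_nonneg_of_neg_pi_div_two_le_of_le (x := (θ + t) / 2) (by linarith [hθ.1]) (by linarith [hθ.2])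
          positivity
        have h4 : y ≤ R * Real.sin θ := by rw [← hsin]; gcongr; linarith
        have h5 : 2 * T * y = 2 * R ^ 2 := by rw [hT]; field_simp
        nlinarith [mul_le_mul_of_nonneg_left h4 hT0.le, pow_pos hR0 2]
      have h1 := hH _ hmem
      have h2 : HasDerivAt (fun θ : ℝ => (R : ℂ) * cexp (θ * I)) (I * (R * cexp (θ * I))) θ := by
        have h3 : HasDerivAt (fun θ : ℝ => (θ : ℂ) * I) (1 * I) θ := (Complex.ofRealCLM.hasDerivAt (x := θ)).mul_const I |>.congr_deriv (by simp)
        exact (h3.cexp.const_mul (R : ℂ)).congr_deriv (by ring)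
      exact HasDerivAt.comp θ h1 h2
    · exact hcont.intervalIntegrable _ _
  have hper : Function.Periodic k (2 * Real.pi) := by
    intro θ
    have : cexp (((θ + 2 * Real.pi : ℝ) : ℂ) * I) = cexp (θ * I) := by
      push_cast; rw [add_mul, Complex.exp_add, Complex.exp_two_pi_mul_I, mul_one]
    simp only [hk, this]
  have hfull : ∫ θ in t..(t + 2 * Real.pi), k θ = -((2 * Real.pi / ((n : ℝ) * Real.sqrt 23) * I2 (4 * Real.pi * Real.sqrt n / Real.sqrt 23) : ℝ) : ℂ) := by
    rw [hper.intervalIntegral_add_eq t 0, zero_add, ← kl_main_sum n hn, ← klJ _ _ hR0, ← intervalIntegral.integral_const_mul]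
    apply intervalIntegral.integral_congr
    intro θ _
    exact klG_mul n (hcne θ)
  have hsplit := intervalIntegral.integral_add_adjacent_intervals
    (hcont.intervalIntegrable (μ := MeasureTheory.volume) t (Real.pi - t)) (hcont.intervalIntegrable (Real.pi - t) (t + 2 * Real.pi))
  have hkey : (∫ x in (-(1/2):ℝ)..(1/2), h (x + y * I)) -
      ((2 * Real.pi / ((n : ℝ) * Real.sqrt 23) * I2 (4 * Real.pi * Real.sqrt n / Real.sqrt 23) : ℝ) : ℂ)
      = ∫ θ in (Real.pi - t)..(t + 2 * Real.pi), k θ := by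
    have e1 : (∫ θ in t..(Real.pi - t), k θ) + (∫ θ in (Real.pi - t)..(t + 2 * Real.pi), k θ) = ∫ θ in t..(t + 2 * Real.pi), k θ := hsplit
    rw [hseg]
    rw [harc, hfull] at e1
    linear_combination -e1
  change ‖(∫ x in (-(1/2):ℝ)..(1/2), h (x + y * I)) - _‖ ≤ _
  rw [hkey]
  have hb : ∀ θ ∈ Set.uIoc (Real.pi - t) (t + 2 * Real.pi), ‖k θ‖ ≤ Real.sqrt 23 * (5 / 4) * Real.exp (8 * Real.pi / 23) * Real.exp (2 * Real.pi * n * y) := by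
    intro θ hθ
    rw [Set.uIoc_of_le (by linarith)] at hθ
    have h3 : Real.sin θ - Real.sin t ≤ 0 := by
      rw [Real.sin_sub_sin]
      have h4 := Real.sin_nonneg_of_nonneg_of_le_pi (x := (θ - t) / 2) (by linarith [hθ.1]) (by linarith [hθ.2])
      have h5 := Real.cos_nonpos_of_pi_div_two_le_of_le (x := (θ + t) / 2) (by linarith [hθ.1]) (by linarith [hθ.2])
      nlinarith
    have h4 : R * Real.sin θ ≤ y := by rw [← hsin]; gcongr; linarith
    simp only [hk, hh]
    rw [norm_mul, norm_mul, klG_norm, klE_norm, norm_mul I, hcnorm, Complex.norm_I, one_mul, Complex.normSq_eq_norm_sq, hcnorm, him]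
    have h6 : (-((n : ℂ) * (R * cexp (θ * I)))).im = - (n * (R * Real.sin θ)) := by
      rw [Complex.neg_im, ← him, show (n : ℂ) = ((n : ℝ) : ℂ) by simp, Complex.im_ofReal_mul]
    rw [h6]
    have h7 : Real.exp (2 * Real.pi / 23 * (R * Real.sin θ / R ^ 2)) ≤ Real.exp (8 * Real.pi / 23) := by
      apply Real.exp_le_exp.2
      have : R * Real.sin θ / R ^ 2 ≤ 4 := by
        rw [div_le_iff₀ (by positivity), hR2]; nlinarith
      nlinarith
    have h8 : Real.exp (-(2 * Real.pi * -(n * (R * Real.sin θ)))) ≤ Real.exp (2 * Real.pi * n * y) := by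
      apply Real.exp_le_exp.2
      have : 2 * Real.pi * n * (R * Real.sin θ) ≤ 2 * Real.pi * n * y := by gcongr
      linarith
    calc _ = Real.sqrt 23 * R ^ 2 * Real.exp (2 * Real.pi / 23 * (R * Real.sin θ / R ^ 2)) * Real.exp (-(2 * Real.pi * -(n * (R * Real.sin θ)))) := by ring
      _ ≤ _ := by
        gcongr
        rw [hR2]; nlinarith
  have := intervalIntegral.norm_integral_le_of_norm_le_const hb
  refine this.trans ?_
  have h9 : |t + 2 * Real.pi - (Real.pi - t)| ≤ 2 * Real.pi := by
    rw [abs_of_nonneg (by linarith)]; linarith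
  calc _ ≤ Real.sqrt 23 * (5 / 4) * Real.exp (8 * Real.pi / 23) * Real.exp (2 * Real.pi * n * y) * (2 * Real.pi) := by gcongr
    _ = _ := by ring

end KLmain

section KLeta
open Complex
open scoped ModularForm

noncomputable def klN (c d : ℤ) (x y : ℝ) : ℝ := y / ((c * x + d) ^ 2 + (c * y) ^ 2)

lemma kl_eta_high : ∃ C : ℝ, 1 ≤ C ∧ ∀ w : ℂ, 3 / 4 ≤ w.im →
    ‖(ModularForm.eta w)⁻¹‖ ≤ C * Real.exp (Real.pi / 12 * w.im) := by
  have hs := kl_p_summable (r := 1 / 2) (by norm_num) (by norm_num)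
  refine ⟨max 1 (∑' n, (p n : ℝ) * (1 / 2) ^ n), le_max_left _ _, ?_⟩
  intro w hw
  have hq : ‖klE w‖ ≤ 1 / 2 := by
    rw [klE_norm]
    have hpi := Real.pi_gt_three
    have h1 := Real.add_one_le_exp (2 * Real.pi * w.im)
    have h2 : 2 ≤ Real.exp (2 * Real.pi * w.im) := by nlinarith
    rw [Real.exp_neg, one_div]
    exact inv_anti₀ (by norm_num) h2
  have hq1 : ‖klE w‖ < 1 := by linarith
  have h1 : Function.Periodic.qParam 1 w = klE w := by simp [Function.Periodic.qParam, klE]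
  have h2 : ModularForm.eta w = Function.Periodic.qParam 24 w * ∏' i : ℕ, (1 - klE w ^ (i + 1)) := by
    rw [ModularForm.eta]
    simp only [ModularForm.eta_q, h1]
  rw [h2, mul_inv, ← kl_p_tsum hq1, norm_mul, mul_comm]
  gcongr
  · refine le_trans ?_ (le_max_right _ _)
    refine (norm_tsum_le_tsum_norm (kl_p_summable_norm hq1)).trans ?_
    refine (kl_p_summable_norm hq1).tsum_le_tsum (fun n => ?_) hs
    rw [norm_mul, norm_pow]
    simp only [Complex.norm_natCast]
    gcongr
  · rw [norm_inv, Function.Periodic.norm_qParam, ← Real.exp_neg]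
    apply le_of_eq; congr 1; ring

lemma kl_eta_bound : ∃ C : ℝ, 1 ≤ C ∧ ∀ z : ℂ, 0 < z.im → z.im ≤ 23 → ∃ c d : ℤ, IsCoprime c d ∧
    3 / 4 ≤ klN c d z.re z.im ∧ (∀ c' d' : ℤ, IsCoprime c' d' → klN c' d' z.re z.im ≤ klN c d z.re z.im) ∧
    ‖(ModularForm.eta z)⁻¹‖ ≤ C * Real.exp (Real.pi / 12 * klN c d z.re z.im) := by
  obtain ⟨C, hC1, hC⟩ := kl_eta_high
  refine ⟨3 * C, by linarith, ?_⟩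
  intro z hz0 hz23
  let τ : UpperHalfPlane := ⟨z, hz0⟩
  have hN : ∀ g : Matrix.SpecialLinearGroup (Fin 2) ℤ, (g • τ).im = klN (g 1 0) (g 1 1) z.re z.im := by
    intro g
    rw [ModularGroup.im_smul_eq_div_normSq, klN]
    congr 1
    rw [ModularGroup.denom_apply, Complex.normSq_apply]
    simp [τ]
    ring
  obtain ⟨g, hg⟩ := ModularGroup.exists_max_im τ
  have h34 : 3 / 4 ≤ (g • τ).im := by
    obtain ⟨g', hg'⟩ := ModularGroup.exists_smul_mem_fd τ
    have := ModularGroup.three_le_four_mul_im_sq_of_mem_fd hg'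
    have h2 := (g' • τ).im_pos
    have h3 := hg g'
    nlinarith
  refine ⟨g 1 0, g 1 1, ModularGroup.bottom_row_coprime g, ?_, ?_, ?_⟩
  · rw [← hN]; exact h34
  · intro c' d' h
    obtain ⟨g', -, hg'⟩ := ModularGroup.bottom_row_surj (R := ℤ) (show ![c', d'] ∈ {cd : Fin 2 → ℤ | IsCoprime (cd 0) (cd 1)} from h)
    have := hg g'
    rw [hN, hN] at this
    simp only at hg'
    rw [hg'] at this
    simpa using this
  · rw [← hN]
    have hinv : (ModularForm.discriminant ∣[(12 : ℤ)] g) = ModularForm.discriminant := by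
      exact SlashInvariantFormClass.slash_action_eq CuspForm.discriminant _ ⟨g, rfl⟩
    have h1 := congrFun hinv τ
    rw [ModularForm.SL_slash_apply] at h1
    have hd0 : UpperHalfPlane.denom g τ ≠ 0 := UpperHalfPlane.denom_ne_zero _ _
    have h2 : ‖(ModularForm.eta z)⁻¹‖ ^ 24 = ‖(ModularForm.eta ((g • τ : UpperHalfPlane) : ℂ))⁻¹‖ ^ 24 * (normSq (UpperHalfPlane.denom g τ)) ^ 6 := by
      simp only [ModularForm.discriminant] at h1
      change _ = ModularForm.eta z ^ 24 at h1
      rw [norm_inv, inv_pow, ← norm_pow, ← h1, Complex.normSq_eq_norm_sq, norm_mul, norm_inv, norm_zpow, norm_pow]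
      rw [mul_inv, ← inv_pow, ← pow_mul]
      congr 1
      rw [zpow_neg, inv_inv]
      norm_cast
    have h3 : normSq (UpperHalfPlane.denom g τ) ≤ 31 := by
      have h4 := ModularGroup.im_smul_eq_div_normSq g τ
      rw [h4] at h34
      have h5 : 0 < normSq (UpperHalfPlane.denom g τ) := Complex.normSq_pos.2 hd0
      rw [le_div_iff₀ h5] at h34
      have h6 : τ.im ≤ 23 := hz23
      linarith
    have h4 := hC _ (show 3 / 4 ≤ ((g • τ : UpperHalfPlane) : ℂ).im from h34)
    refine le_of_pow_le_pow_left₀ (n := 24) (by norm_num) (by positivity) ?_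
    rw [h2]
    have h5 : (normSq (UpperHalfPlane.denom g τ)) ^ 6 ≤ 3 ^ 24 := by
      calc _ ≤ (31 : ℝ) ^ 6 := by gcongr; exact Complex.normSq_nonneg _
        _ ≤ _ := by norm_num
    calc _ ≤ (C * Real.exp (Real.pi / 12 * ((g • τ : UpperHalfPlane) : ℂ).im)) ^ 24 * 3 ^ 24 := by
          gcongr
      _ = _ := by rw [← mul_pow, UpperHalfPlane.coe_im]; ring

end KLeta

section KLarith

lemma klN_neg (c d : ℤ) (x y : ℝ) : klN (-c) (-d) x y = klN c d x y := by
  simp only [klN]; push_cast; congr 1; ring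

lemma klN_le_c {c : ℤ} (d : ℤ) {x y k : ℝ} (hk : 0 < k) (hc : k ≤ (c : ℝ)) (hy : 0 < y) :
    klN c d x y ≤ 1 / k ^ 2 * (1 / y) := by
  have hc0 : 0 < (c : ℝ) := by linarith
  rw [klN, div_mul_div_comm, one_mul, div_le_div_iff₀ (by positivity) (by positivity)]
  have h1 : k ^ 2 ≤ (c : ℝ) ^ 2 := by gcongr
  nlinarith [mul_le_mul_of_nonneg_right h1 (sq_nonneg y), sq_nonneg ((c : ℝ) * x + d)]

lemma klN_le_u {c d : ℤ} {x y e : ℝ} (he : 0 < e) (hu : e ≤ |c * x + d|) (hy : 0 < y) :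
    klN c d x y ≤ y / e ^ 2 := by
  have h1 : e ^ 2 ≤ (c * x + d) ^ 2 := by rw [← sq_abs (c * x + d)]; gcongr
  rw [klN]
  gcongr
  nlinarith [sq_nonneg ((c : ℝ) * y)]

lemma klN_zero {d : ℤ} {x y : ℝ} (h : IsCoprime (0 : ℤ) d) : klN 0 d x y = y := by
  rw [isCoprime_zero_left, Int.isUnit_iff] at h
  rcases h with h | h <;> subst h <;> simp [klN]

lemma kl_lin {a b D u v e f : ℝ} (ha : 0 ≤ a) (hb : 0 ≤ b) (h : a * u - b * v = D) (hD : 1 ≤ |D|)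
    (hef : a * e + b * f ≤ 1) : e ≤ |u| ∨ f ≤ |v| := by
  by_contra hcon
  push Not at hcon
  have h1 : |D| ≤ a * |u| + b * |v| := by
    rw [← h]
    calc _ ≤ |a * u| + |b * v| := abs_sub _ _
      _ = _ := by rw [abs_mul, abs_mul, abs_of_nonneg ha, abs_of_nonneg hb]
  have h2 : a * |u| ≤ a * e := by gcongr; exact hcon.1.le
  have h3 : b * |v| ≤ b * f := by gcongr; exact hcon.2.le
  have hh : 0 < a ∨ 0 < b := by
    by_contra h4
    push Not at h4
    have : a = 0 := by linarith
    have : b = 0 := by linarith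
    subst a b
    rw [← h] at hD
    norm_num at hD
  rcases hh with h4 | h4
  · have := mul_lt_mul_of_pos_left hcon.1 h4; linarith
  · have := mul_lt_mul_of_pos_left hcon.2 h4; linarith

lemma kl_arith {x y : ℝ} (hx : |x| ≤ 1 / 2) (hy : 0 < y) (hy1 : y ≤ 1) {c d c' d' : ℤ}
    (hc : 0 ≤ c) (hc' : 0 ≤ c') (hcd : IsCoprime c d) (hcd' : IsCoprime c' d')
    (hT' : klN 1 0 (23 * x) (23 * y) ≤ klN c' d' (23 * x) (23 * y)) :
    (c = 1 ∧ d = 0 ∧ c' = 1 ∧ d' = 0) ∨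
    klN c d x y + klN c' d' (23 * x) (23 * y) ≤ 0.26 * (1 / y) + 10000 ∨
    klN c d x y + klN c' d' (23 * x) (23 * y) ≤ 6 / 23 * (y / ((x + 1 / 2) ^ 2 + y ^ 2)) ∨
    klN c d x y + klN c' d' (23 * x) (23 * y) ≤ 6 / 23 * (y / ((x - 1 / 2) ^ 2 + y ^ 2)) := by
  have hy23 : 0 < 23 * y := by linarith
  have hiy : 0 < 1 / y := by positivity
  have hi23 : 1 / (23 * y) = 1 / 23 * (1 / y) := by field_simp
  -- generic bound for the second summand
  have hN' : klN c' d' (23 * x) (23 * y) ≤ 1 / 23 * (1 / y) + 23 := by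
    rcases hc'.eq_or_lt with h | h
    · subst h; rw [klN_zero hcd']; linarith
    · have := klN_le_c (x := 23 * x) d' one_pos (by exact_mod_cast h : (1 : ℝ) ≤ c') hy23
      rw [hi23] at this; linarith
  have hN'3 : 3 ≤ c' → klN c' d' (23 * x) (23 * y) ≤ 1 / 207 * (1 / y) := by
    intro h
    have := klN_le_c (x := 23 * x) d' (by norm_num) (by exact_mod_cast h : (3 : ℝ) ≤ c') hy23
    rw [hi23] at this; linarith
  have hTT : klN 1 0 x y = 23 * klN 1 0 (23 * x) (23 * y) := by
    simp only [klN]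
    have : x ^ 2 + y ^ 2 ≠ 0 := by positivity
    have : (23 * x) ^ 2 + (23 * y) ^ 2 ≠ 0 := by positivity
    simp
    field_simp
  obtain h | h | h | h : c = 0 ∨ c = 1 ∨ c = 2 ∨ 3 ≤ c := by omega
  · subst h
    right; left
    rw [klN_zero hcd]; linarith
  · subst h
    by_cases hd : d = 0
    · subst hd
      have hNN : klN 1 0 x y ≤ 23 * klN c' d' (23 * x) (23 * y) := by rw [hTT]; linarith
      obtain h | h | h | h : c' = 0 ∨ c' = 1 ∨ c' = 2 ∨ 3 ≤ c' := by omega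
      · subst h
        right; left
        rw [klN_zero hcd'] at hNN ⊢; linarith
      · by_cases hd' : d' = 0
        · left; exact ⟨rfl, rfl, h, hd'⟩
        · right; left
          have h1 : (1 : ℝ) ≤ |(-d' : ℝ)| := by rw [abs_neg]; exact_mod_cast Int.one_le_abs hd'
          rcases kl_lin (a := 23) (b := 1) (u := (1 : ℤ) * x + (0 : ℤ)) (v := c' * (23 * x) + d') (D := -d') (e := 1 / 46) (f := 1 / 2)
            (by norm_num) (by norm_num) (by rw [h]; push_cast; ring) h1 (by norm_num) with h2 | h2
          · have := klN_le_u (by norm_num) h2 hy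
            norm_num at this
            linarith
          · have := klN_le_u (by norm_num) h2 hy23
            norm_num at this
            linarith
      · right; left
        have hd' : d' ≠ 0 := by
          rintro rfl; rw [isCoprime_zero_right, Int.isUnit_iff] at hcd'; omega
        have h1 : (1 : ℝ) ≤ |(-d' : ℝ)| := by rw [abs_neg]; exact_mod_cast Int.one_le_abs hd'
        rcases kl_lin (a := 46) (b := 1) (u := (1 : ℤ) * x + (0 : ℤ)) (v := c' * (23 * x) + d') (D := -d') (e := 1 / 92) (f := 1 / 2)
            (by norm_num) (by norm_num) (by rw [h]; push_cast; ring) h1 (by norm_num) with h2 | h2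
        · have := klN_le_u (by norm_num) h2 hy
          norm_num at this
          linarith
        · have := klN_le_u (by norm_num) h2 hy23
          norm_num at this
          linarith
      · right; left
        have := hN'3 h
        linarith
    · right; left
      have h1 : (1 : ℝ) ≤ |(d : ℝ)| := by exact_mod_cast Int.one_le_abs hd
      have h2 : 1 / 2 ≤ |((1 : ℤ) : ℝ) * x + d| := by
        have := abs_sub_abs_le_abs_sub (d : ℝ) (-x)
        rw [abs_neg] at this
        rw [show ((1 : ℤ) : ℝ) * x + d = d - -x by push_cast; ring]
        linarith
      have := klN_le_u (by norm_num) h2 hy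
      norm_num at this
      linarith
  · have hN := klN_le_c (x := x) d (by norm_num) (by rw [h]; norm_num : (2 : ℝ) ≤ c) hy
    have hdodd : d % 2 = 1 := by
      by_contra hh
      have h2 : (2 : ℤ) ∣ d := by omega
      rw [h] at hcd
      have := hcd.isUnit_of_dvd' dvd_rfl h2
      rw [Int.isUnit_iff] at this; omega
    obtain h' | h' | h' | h' : c' = 0 ∨ c' = 1 ∨ c' = 2 ∨ 3 ≤ c' := by omega
    · right; left
      rw [h'] at hcd' ⊢
      rw [klN_zero hcd']; linarith
    · right; left
      have h0 : 23 * d - 2 * d' ≠ 0 := by omega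
      have h1 : (1 : ℝ) ≤ |(23 * d - 2 * d' : ℝ)| := by exact_mod_cast Int.one_le_abs h0
      rcases kl_lin (a := 23) (b := 2) (u := c * x + d) (v := c' * (23 * x) + d') (D := 23 * d - 2 * d') (e := 1 / 46) (f := 1 / 4)
          (by norm_num) (by norm_num) (by rw [h, h']; push_cast; ring) h1 (by norm_num) with h2 | h2
      · have := klN_le_u (by norm_num) h2 hy
        norm_num at this
        linarith
      · have := klN_le_u (by norm_num) h2 hy23
        norm_num at this
        linarith
    · by_cases h0 : 46 * d - 2 * d' = 0
      · have hd' : d' = 23 * d := by omega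
        have hsum : klN c d x y + klN c' d' (23 * x) (23 * y) = 6 / 23 * (y / ((x + d / 2) ^ 2 + y ^ 2)) := by
          simp only [klN]
          rw [h, h', hd']
          push_cast
          have e1 : (x + d / 2) ^ 2 + y ^ 2 ≠ 0 := by positivity
          rw [show (2 * x + (d : ℝ)) ^ 2 + (2 * y) ^ 2 = 4 * ((x + d / 2) ^ 2 + y ^ 2) by ring,
            show (2 * (23 * x) + 23 * (d : ℝ)) ^ 2 + (2 * (23 * y)) ^ 2 = 2116 * ((x + d / 2) ^ 2 + y ^ 2) by ring]
          field_simp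
          norm_num
        rw [hsum]
        right; right
        have hx' := abs_le.1 hx
        rcases lt_or_ge d 0 with h3 | h3
        · right
          have h4 : (d : ℝ) ≤ -1 := by exact_mod_cast (by omega : d ≤ -1)
          gcongr 6 / 23 * (y / (?_ + y ^ 2))
          nlinarith
        · left
          have h4 : (1 : ℝ) ≤ d := by exact_mod_cast (by omega : 1 ≤ d)
          gcongr 6 / 23 * (y / (?_ + y ^ 2))
          nlinarith
      · right; left
        have h1 : (1 : ℝ) ≤ |(46 * d - 2 * d' : ℝ)| := by exact_mod_cast Int.one_le_abs h0
        rcases kl_lin (a := 46) (b := 2) (u := c * x + d) (v := c' * (23 * x) + d') (D := 46 * d - 2 * d') (e := 1 / 92) (f := 1 / 4)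
            (by norm_num) (by norm_num) (by rw [h, h']; push_cast; ring) h1 (by norm_num) with h2 | h2
        · have := klN_le_u (by norm_num) h2 hy
          norm_num at this
          linarith
        · have := klN_le_u (by norm_num) h2 hy23
          norm_num at this
          linarith
    · right; left
      have := hN'3 h'
      linarith
  · right; left
    have hN := klN_le_c (x := x) d (by norm_num) (by exact_mod_cast h : (3 : ℝ) ≤ c) hy
    linarith

end KLarith

section KLpoint
open Complex

lemma kl_eta_bound_nonneg : ∃ C : ℝ, 1 ≤ C ∧ ∀ z : ℂ, 0 < z.im → z.im ≤ 23 → ∃ c d : ℤ, 0 ≤ c ∧ IsCoprime c d ∧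
    3 / 4 ≤ klN c d z.re z.im ∧ (∀ c' d' : ℤ, IsCoprime c' d' → klN c' d' z.re z.im ≤ klN c d z.re z.im) ∧
    ‖(ModularForm.eta z)⁻¹‖ ≤ C * Real.exp (Real.pi / 12 * klN c d z.re z.im) := by
  obtain ⟨C, hC, h⟩ := kl_eta_bound
  refine ⟨C, hC, fun z h1 h2 => ?_⟩
  obtain ⟨c, d, h3, h4⟩ := h z h1 h2
  rcases le_total 0 c with h5 | h5
  · exact ⟨c, d, h5, h3, h4⟩
  · refine ⟨-c, -d, by omega, h3.neg_neg, ?_⟩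
    rw [klN_neg]; exact h4

set_option maxHeartbeats 800000 in
lemma kl_pointwise : ∃ C : ℝ, 0 < C ∧ ∀ x y : ℝ, |x| ≤ 1 / 2 → 0 < y → y ≤ 1 →
    ‖klF (x + y * I) - klG (x + y * I)‖ ≤ C * (1 + Real.exp (Real.pi / 12 * (0.26 * (1 / y))) +
      Real.exp (Real.pi / 46 * (y / ((x + 1 / 2) ^ 2 + y ^ 2))) +
      Real.exp (Real.pi / 46 * (y / ((x - 1 / 2) ^ 2 + y ^ 2)))) := by
  obtain ⟨C0, hC0, h0⟩ := kl_eta_bound_nonneg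
  obtain ⟨C1, hC1, h1⟩ := kl_near
  have hpi := Real.pi_pos
  set K : ℝ := Real.exp (Real.pi / 12 * 10000) with hK
  have hK1 : 1 ≤ K := Real.one_le_exp (by positivity)
  refine ⟨(C0 ^ 2 + 10) * K + 10 * C1, by positivity, ?_⟩
  intro x y hx hy hy1
  set z : ℂ := x + y * I with hz
  have hre : z.re = x := by simp [hz]
  have him : z.im = y := by simp [hz]
  have hre' : (23 * z).re = 23 * x := by simp [hz]
  have him' : (23 * z).im = 23 * y := by simp [hz]
  have hz0 : z ≠ 0 := by intro h; rw [h] at him; simp at him; linarith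
  have hnz : ‖z‖ ≤ 2 := by
    have := Complex.norm_le_abs_re_add_abs_im z
    rw [hre, him, abs_of_pos hy] at this
    linarith
  have h5 : Real.sqrt 23 ≤ 5 := by rw [Real.sqrt_le_left (by norm_num)]; norm_num
  have hsz : Real.sqrt 23 * ‖z‖ ≤ 10 := by nlinarith [norm_nonneg z, Real.sqrt_nonneg 23]
  set E1 := Real.exp (Real.pi / 12 * (0.26 * (1 / y))) with hE1
  set E2 := Real.exp (Real.pi / 46 * (y / ((x + 1 / 2) ^ 2 + y ^ 2))) with hE2
  set E3 := Real.exp (Real.pi / 46 * (y / ((x - 1 / 2) ^ 2 + y ^ 2))) with hE3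
  have hE1p : 0 < E1 := Real.exp_pos _
  have hE2p : 0 < E2 := Real.exp_pos _
  have hE3p : 0 < E3 := Real.exp_pos _
  obtain ⟨c, d, hc, hcd, -, hmax, hb⟩ := h0 z (by rw [him]; exact hy) (by rw [him]; linarith)
  obtain ⟨c', d', hc', hcd', h34, hmax', hb'⟩ := h0 (23 * z) (by rw [him']; linarith) (by rw [him']; linarith)
  rw [hre, him] at hmax hb
  rw [hre', him'] at hmax' hb' h34
  have hT := hmax 1 0 isCoprime_one_left
  have hT' := hmax' 1 0 isCoprime_one_left
  have hTT : klN 1 0 x y = 23 * klN 1 0 (23 * x) (23 * y) := by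
    simp only [klN]
    have : x ^ 2 + y ^ 2 ≠ 0 := by positivity
    have : (23 * x) ^ 2 + (23 * y) ^ 2 ≠ 0 := by positivity
    simp
    field_simp
  have hTz : z.im / normSq z = klN 1 0 x y := by
    rw [Complex.normSq_apply, hre, him, klN]; congr 1; push_cast; ring
  have hgen : ‖klF z - klG z‖ ≤ (C0 ^ 2 + 10) * Real.exp (Real.pi / 12 * (klN c d x y + klN c' d' (23 * x) (23 * y))) := by
    refine (norm_sub_le _ _).trans ?_
    rw [add_mul]
    apply add_le_add
    · rw [klF, mul_inv, norm_mul, mul_add (Real.pi / 12), Real.exp_add]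
      calc _ ≤ (C0 * Real.exp (Real.pi / 12 * klN c d x y)) * (C0 * Real.exp (Real.pi / 12 * klN c' d' (23 * x) (23 * y))) := by gcongr
        _ = _ := by ring
    · rw [klG_norm, hTz]
      refine mul_le_mul hsz ?_ (Real.exp_pos _).le (by norm_num)
      apply Real.exp_le_exp.2
      rw [show 2 * Real.pi / 23 * klN 1 0 x y = Real.pi / 12 * (klN 1 0 x y + klN 1 0 x y / 23) by ring]
      apply mul_le_mul_of_nonneg_left _ (by positivity)
      linarith
  have hfin : ∀ X, X ≤ K * E1 ∨ X ≤ E2 ∨ X ≤ E3 → X ≤ K * (1 + E1 + E2 + E3) := by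
    intro X hX
    have e2 : E2 ≤ K * E2 := le_mul_of_one_le_left hE2p.le hK1
    have e3 : E3 ≤ K * E3 := le_mul_of_one_le_left hE3p.le hK1
    have e1 : 0 < K * E1 := by positivity
    rw [mul_add, mul_add, mul_add]
    rcases hX with h | h | h <;> linarith
  have hwrap : Real.exp (Real.pi / 12 * (klN c d x y + klN c' d' (23 * x) (23 * y))) ≤ K * (1 + E1 + E2 + E3) →
      ‖klF z - klG z‖ ≤ ((C0 ^ 2 + 10) * K + 10 * C1) * (1 + E1 + E2 + E3) := by
    intro h
    refine hgen.trans ?_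
    have h2 : 0 ≤ 10 * C1 * (1 + E1 + E2 + E3) := by positivity
    have h3 := mul_le_mul_of_nonneg_left h (show 0 ≤ C0 ^ 2 + 10 by positivity)
    linarith
  rcases kl_arith hx hy hy1 hc hc' hcd hcd' hT' with ⟨-, -, h3, h4⟩ | h3 | h3 | h3
  · rw [h3, h4] at h34
    set w : ℂ := -1 / (23 * z) with hw
    have hwim : w.im = klN 1 0 (23 * x) (23 * y) := by
      rw [hw, neg_div, one_div, Complex.neg_im, Complex.inv_im, Complex.normSq_apply, hre', him', klN]
      rw [neg_div, neg_neg]; congr 1; push_cast; ring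
    have h6 := h1 w (by rw [hwim]; exact h34)
    have h7 : klF z - klG z = (-I * (Real.sqrt 23 : ℝ) * z) * (klF w - klE (-w)) := by
      rw [kl_fricke (by rw [him]; exact hy), klG, hw, show -(-1 / (23 * z)) = 1 / (23 * z) by ring]; ring
    rw [h7, norm_mul]
    have h8 : ‖-I * (Real.sqrt 23 : ℝ) * z‖ ≤ 10 := by
      rw [norm_mul]; simpa [abs_of_nonneg (Real.sqrt_nonneg 23)] using hsz
    have h9 : ‖-I * (Real.sqrt 23 : ℝ) * z‖ * ‖klF w - klE (-w)‖ ≤ 10 * C1 := by gcongr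
    refine h9.trans ?_
    have : 0 ≤ (C0 ^ 2 + 10) * K * (1 + E1 + E2 + E3) := by positivity
    have : 0 ≤ C1 * (E1 + E2 + E3) := by positivity
    linarith
  · apply hwrap; apply hfin; left
    rw [hK, hE1, ← Real.exp_add]; apply Real.exp_le_exp.2
    rw [← mul_add]; apply mul_le_mul_of_nonneg_left _ (by positivity); linarith
  · apply hwrap; apply hfin; right; left
    rw [hE2]; apply Real.exp_le_exp.2
    calc _ ≤ Real.pi / 12 * (6 / 23 * (y / ((x + 1 / 2) ^ 2 + y ^ 2))) := by gcongr
      _ = _ := by ring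
  · apply hwrap; apply hfin; right; right
    rw [hE3]; apply Real.exp_le_exp.2
    calc _ ≤ Real.pi / 12 * (6 / 23 * (y / ((x - 1 / 2) ^ 2 + y ^ 2))) := by gcongr
      _ = _ := by ring

end KLpoint

section KLint
open Complex MeasureTheory

lemma kl_gauss {y : ℝ} (s : ℝ) (hy : 0 < y) :
    ∫ x in (-(1/2):ℝ)..(1/2), Real.exp (Real.pi / 46 * (y / ((x + s) ^ 2 + y ^ 2))) ≤
      10 * Real.sqrt (y ^ 3) * Real.exp (Real.pi / 46 * (1 / y)) + Real.exp (Real.pi / 46 * (1 / y) / 2) := by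
  have hpi := Real.pi_pos
  set A : ℝ := Real.pi / 46 with hA
  have hA0 : 0 < A := by positivity
  set b : ℝ := A / (2 * y ^ 3) with hb
  have hb0 : 0 < b := by positivity
  have hpt : ∀ x : ℝ, Real.exp (A * (y / ((x + s) ^ 2 + y ^ 2))) ≤
      Real.exp (A * (1 / y)) * Real.exp (-b * (x + s) ^ 2) + Real.exp (A * (1 / y) / 2) := by
    intro x
    set u := x + s
    by_cases h : u ^ 2 ≤ y ^ 2
    · refine le_trans ?_ (le_add_of_nonneg_right (Real.exp_pos _).le)
      rw [← Real.exp_add]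
      apply Real.exp_le_exp.2
      have h1 : y / (u ^ 2 + y ^ 2) ≤ 1 / y - u ^ 2 / (2 * y ^ 3) := by
        rw [div_sub_div _ _ hy.ne' (by positivity), div_le_div_iff₀ (by positivity) (by positivity)]
        nlinarith [mul_nonneg (mul_nonneg hy.le (sq_nonneg u)) (sub_nonneg.2 h)]
      calc _ ≤ A * (1 / y - u ^ 2 / (2 * y ^ 3)) := by gcongr
        _ = _ := by rw [hb]; ring
    · push Not at h
      refine le_trans ?_ (le_add_of_nonneg_left (by positivity))
      apply Real.exp_le_exp.2
      have h1 : y / (u ^ 2 + y ^ 2) ≤ 1 / y / 2 := by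
        rw [div_div, div_le_div_iff₀ (by positivity) (by positivity)]
        nlinarith
      calc _ ≤ A * (1 / y / 2) := by gcongr
        _ = _ := by ring
  have hc1 : Continuous fun x : ℝ => Real.exp (A * (y / ((x + s) ^ 2 + y ^ 2))) := by
    have : ∀ x : ℝ, (x + s) ^ 2 + y ^ 2 ≠ 0 := fun x => by positivity
    fun_prop (disch := assumption)
  have hgi : Integrable (fun x : ℝ => Real.exp (-b * (x + s) ^ 2)) :=
    (integrable_exp_neg_mul_sq hb0).comp_add_right s
  have hgv : ∫ x : ℝ, Real.exp (-b * (x + s) ^ 2) = Real.sqrt (Real.pi / b) := by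
    rw [← integral_gaussian b]
    exact integral_add_right_eq_self (fun x : ℝ => Real.exp (-b * x ^ 2)) s
  have hsq : Real.sqrt (Real.pi / b) ≤ 10 * Real.sqrt (y ^ 3) := by
    rw [show Real.pi / b = 92 * y ^ 3 by rw [hb, hA]; field_simp; norm_num, Real.sqrt_mul (by norm_num)]
    gcongr
    rw [Real.sqrt_le_left (by norm_num)]; norm_num
  have hle : (-(1/2) : ℝ) ≤ 1 / 2 := by norm_num
  have hgl : ∫ x in (-(1/2):ℝ)..(1/2), Real.exp (-b * (x + s) ^ 2) ≤ Real.sqrt (Real.pi / b) := by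
    rw [← hgv, intervalIntegral.integral_of_le hle]
    exact setIntegral_le_integral hgi (Eventually.of_forall fun x => (Real.exp_pos _).le)
  calc _ ≤ ∫ x in (-(1/2):ℝ)..(1/2), (Real.exp (A * (1 / y)) * Real.exp (-b * (x + s) ^ 2) + Real.exp (A * (1 / y) / 2)) := by
        apply intervalIntegral.integral_mono_on hle (hc1.intervalIntegrable _ _)
        · apply Continuous.intervalIntegrable; fun_prop
        · intro x _; exact hpt x
    _ = Real.exp (A * (1 / y)) * (∫ x in (-(1/2):ℝ)..(1/2), Real.exp (-b * (x + s) ^ 2)) + Real.exp (A * (1 / y) / 2) := by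
        rw [intervalIntegral.integral_add, intervalIntegral.integral_const_mul, intervalIntegral.integral_const]
        · norm_num
        · apply Continuous.intervalIntegrable; fun_prop
        · apply Continuous.intervalIntegrable; fun_prop
    _ ≤ Real.exp (A * (1 / y)) * (10 * Real.sqrt (y ^ 3)) + Real.exp (A * (1 / y) / 2) := by
        gcongr; exact hgl.trans hsq
    _ = _ := by ring

lemma klF_diff {z : ℂ} (hz : 0 < z.im) : DifferentiableAt ℂ klF z := by
  have h2 : 0 < (23 * z).im := by simpa using hz
  have h3 : DifferentiableAt ℂ (fun w : ℂ => ModularForm.eta (23 * w)) z :=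
    DifferentiableAt.comp (f := fun w : ℂ => 23 * w) z (ModularForm.differentiableAt_eta_of_mem_upperHalfPlaneSet h2) (by fun_prop)
  exact ((ModularForm.differentiableAt_eta_of_mem_upperHalfPlaneSet hz).mul h3).inv
    (mul_ne_zero (ModularForm.eta_ne_zero hz) (ModularForm.eta_ne_zero h2))

lemma kl_err : ∃ C : ℝ, 0 < C ∧ ∀ n : ℕ, 1 ≤ n → ∀ y : ℝ, 0 < y → y ≤ 1 →
    |(pSigma (n + 1) : ℝ) - 2 * Real.pi / ((n : ℝ) * Real.sqrt 23) * I2 (4 * Real.pi * Real.sqrt n / Real.sqrt 23)|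
      ≤ C * Real.exp (2 * Real.pi * n * y) * (1 + Real.exp (Real.pi / 12 * (0.26 * (1 / y))) +
        Real.sqrt (y ^ 3) * Real.exp (Real.pi / 46 * (1 / y)) + Real.exp (Real.pi / 46 * (1 / y) / 2)) := by
  obtain ⟨C1, hC1, h1⟩ := kl_main
  obtain ⟨C2, hC2, h2⟩ := kl_pointwise
  refine ⟨C1 + 20 * C2, by positivity, ?_⟩
  intro n hn y hy hy1
  have hm := h1 n hn y hy hy1
  set M : ℝ := 2 * Real.pi / ((n : ℝ) * Real.sqrt 23) * I2 (4 * Real.pi * Real.sqrt n / Real.sqrt 23)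
  set E := Real.exp (2 * Real.pi * n * y) with hE
  have hE0 : 0 < E := Real.exp_pos _
  set a1 := Real.exp (Real.pi / 12 * (0.26 * (1 / y))) with ha1
  set a2 := Real.sqrt (y ^ 3) * Real.exp (Real.pi / 46 * (1 / y)) with ha2
  set a3 := Real.exp (Real.pi / 46 * (1 / y) / 2) with ha3
  have ha1p : 0 < a1 := Real.exp_pos _
  have ha2p : 0 ≤ a2 := by positivity
  have ha3p : 0 < a3 := Real.exp_pos _
  have hle : (-(1/2) : ℝ) ≤ 1 / 2 := by norm_num
  have hco := kl_coeff n hy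
  have hlc : Continuous fun x : ℝ => (x : ℂ) + y * I := by fun_prop
  have him : ∀ x : ℝ, ((x : ℂ) + y * I).im = y := by intro x; simp
  have hcE : Continuous fun x : ℝ => klE (-(n * ((x : ℂ) + y * I))) := klE_cont.comp (by fun_prop)
  have hcF : Continuous fun x : ℝ => klF ((x : ℂ) + y * I) := by
    rw [continuous_iff_continuousAt]
    intro x
    have h3 : ContinuousAt klF ((x : ℂ) + y * I) := (klF_diff (by rw [him]; exact hy)).continuousAt
    exact ContinuousAt.comp (f := fun x : ℝ => (x : ℂ) + y * I) h3 hlc.continuousAt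
  have hcG : Continuous fun x : ℝ => klG ((x : ℂ) + y * I) := by
    have : ∀ x : ℝ, (23 : ℂ) * ((x : ℂ) + y * I) ≠ 0 := by
      intro x h
      have := congrArg Complex.im h
      simp at this; linarith
    simp only [klG, klE]
    fun_prop (disch := assumption)
  have hdiff : ‖(∫ x in (-(1/2):ℝ)..(1/2), klF (x + y * I) * klE (-(n * (x + y * I)))) -
      (∫ x in (-(1/2):ℝ)..(1/2), klG (x + y * I) * klE (-(n * (x + y * I))))‖ ≤ 20 * C2 * E * (1 + a1 + a2 + a3) := by
    have i1 : IntervalIntegrable (fun x : ℝ => klF (x + y * I) * klE (-(n * (x + y * I)))) volume (-(1/2)) (1/2) :=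
      (hcF.mul hcE).intervalIntegrable _ _
    have i2 : IntervalIntegrable (fun x : ℝ => klG (x + y * I) * klE (-(n * (x + y * I)))) volume (-(1/2)) (1/2) :=
      (hcG.mul hcE).intervalIntegrable _ _
    rw [← intervalIntegral.integral_sub i1 i2]
    set g : ℝ → ℝ := fun x => C2 * E * ((1 + a1) + Real.exp (Real.pi / 46 * (y / ((x + 1 / 2) ^ 2 + y ^ 2))) +
      Real.exp (Real.pi / 46 * (y / ((x + -(1 / 2)) ^ 2 + y ^ 2)))) with hg
    have hcs : ∀ s : ℝ, Continuous fun x : ℝ => Real.exp (Real.pi / 46 * (y / ((x + s) ^ 2 + y ^ 2))) := by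
      intro s
      have : ∀ x : ℝ, (x + s) ^ 2 + y ^ 2 ≠ 0 := fun x => by positivity
      fun_prop (disch := assumption)
    have hgc : Continuous g := by
      have h3 := hcs (1 / 2)
      have h4 := hcs (-(1 / 2))
      simp only [hg]
      exact continuous_const.mul ((continuous_const.add h3).add h4)
    have hb : ∀ᵐ x : ℝ, x ∈ Set.Ioc (-(1/2):ℝ) (1/2) →
        ‖klF (x + y * I) * klE (-(n * (x + y * I))) - klG (x + y * I) * klE (-(n * (x + y * I)))‖ ≤ g x := by
      refine Eventually.of_forall fun x hx => ?_
      rw [← sub_mul, norm_mul, klE_norm]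
      have h3 := h2 x y (abs_le.2 ⟨hx.1.le, hx.2⟩) hy hy1
      have h4 : -(2 * Real.pi * (-((n : ℂ) * (x + y * I))).im) = 2 * Real.pi * n * y := by simp; ring
      rw [h4, ← hE]
      calc _ ≤ _ := mul_le_mul_of_nonneg_right h3 hE0.le
        _ = g x := by simp only [hg, sub_eq_add_neg]; ring
    refine (intervalIntegral.norm_integral_le_of_norm_le hle hb (hgc.intervalIntegrable _ _)).trans ?_
    have hgi : ∫ x in (-(1/2):ℝ)..(1/2), g x = C2 * E * ((1 + a1) +
        (∫ x in (-(1/2):ℝ)..(1/2), Real.exp (Real.pi / 46 * (y / ((x + 1 / 2) ^ 2 + y ^ 2)))) +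
        (∫ x in (-(1/2):ℝ)..(1/2), Real.exp (Real.pi / 46 * (y / ((x + -(1 / 2)) ^ 2 + y ^ 2))))) := by
      simp only [hg]
      rw [intervalIntegral.integral_const_mul, intervalIntegral.integral_add, intervalIntegral.integral_add, intervalIntegral.integral_const]
      · norm_num
      · exact continuous_const.intervalIntegrable _ _
      · exact (hcs _).intervalIntegrable _ _
      · exact (continuous_const.add (hcs _)).intervalIntegrable _ _
      · exact (hcs _).intervalIntegrable _ _
    rw [hgi]
    have g1 := kl_gauss (1 / 2) hy
    have g2 := kl_gauss (-(1 / 2)) hy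
    rw [mul_assoc 10, ← ha2, ← ha3] at g1 g2
    calc _ ≤ C2 * E * ((1 + a1) + (10 * a2 + a3) + (10 * a2 + a3)) := by gcongr
      _ ≤ C2 * E * (20 * (1 + a1 + a2 + a3)) := by
        gcongr; linarith
      _ = _ := by ring
  rw [hco] at hdiff
  have hfin : ‖((pSigma (n + 1) : ℝ) : ℂ) - (M : ℂ)‖ ≤ 20 * C2 * E * (1 + a1 + a2 + a3) + C1 * E := by
    have := norm_add_le_of_le hdiff hm
    rw [sub_add_sub_cancel] at this
    simpa using this
  rw [← Complex.ofReal_sub, Complex.norm_real, Real.norm_eq_abs] at hfin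
  refine hfin.trans ?_
  have : C1 * E ≤ C1 * E * (1 + a1 + a2 + a3) := le_mul_of_one_le_right (by positivity) (by linarith)
  linarith

end KLint

lemma kl_final_real : ∃ C : ℝ, 0 < C ∧ ∀ᶠ E : ℝ in atTop, ∀ y : ℝ, 0 < y → Real.pi / 46 * (1 / y) = E →
    1 + Real.exp (Real.pi / 12 * (0.26 * (1 / y))) +
        Real.sqrt (y ^ 3) * Real.exp (Real.pi / 46 * (1 / y)) + Real.exp (Real.pi / 46 * (1 / y) / 2)
      ≤ C * (Real.exp E / (E * Real.sqrt E)) := by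
  refine ⟨4, by norm_num, ?_⟩
  have hlim : Tendsto (fun x : ℝ => x ^ (3/2 : ℝ) * Real.exp (-(1/1000) * x)) atTop (nhds 0) :=
    tendsto_rpow_mul_exp_neg_mul_atTop_nhds_zero _ _ (by norm_num)
  filter_upwards [hlim.eventually (gt_mem_nhds (show (0 : ℝ) < 1 by norm_num)), eventually_ge_atTop 1] with E hE hE1 y hy hyE
  have hE0 : 0 < E := by linarith
  have hpi := Real.pi_pos
  have hr : E ^ (3/2 : ℝ) = E * Real.sqrt E := by
    rw [Real.sqrt_eq_rpow, show (3/2 : ℝ) = 1 + 1 / 2 by norm_num, Real.rpow_add hE0, Real.rpow_one]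
  rw [hr] at hE
  set W := E * Real.sqrt E with hW
  have hW0 : 0 < W := by positivity
  have hkey : Real.exp (999 / 1000 * E) ≤ Real.exp E / W := by
    rw [le_div_iff₀ hW0]
    have : Real.exp (999 / 1000 * E) = Real.exp E * Real.exp (-(1/1000) * E) := by
      rw [← Real.exp_add]; congr 1; ring
    rw [this]
    have := Real.exp_pos E
    nlinarith
  have e1 : (1 : ℝ) ≤ Real.exp (999 / 1000 * E) := Real.one_le_exp (by positivity)
  have e2 : Real.exp (Real.pi / 12 * (0.26 * (1 / y))) ≤ Real.exp (999 / 1000 * E) := by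
    apply Real.exp_le_exp.2
    rw [← hyE]
    have : 0 < Real.pi * (1 / y) := by positivity
    linarith
  have e3 : Real.exp (Real.pi / 46 * (1 / y) / 2) ≤ Real.exp (999 / 1000 * E) := by
    apply Real.exp_le_exp.2
    rw [hyE]; linarith
  have e4 : Real.sqrt (y ^ 3) ≤ 1 / W := by
    have h1 : y ≤ 1 / E := by
      rw [← hyE]
      have : Real.pi < 46 := by linarith [Real.pi_lt_four]
      rw [mul_one_div, one_div_div, le_div_iff₀ (by positivity)]
      have : Real.pi / 46 ≤ 1 := by linarith
      nlinarith
    have h2 : Real.sqrt (y ^ 3) = y * Real.sqrt y := by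
      rw [show y ^ 3 = y ^ 2 * y by ring, Real.sqrt_mul (by positivity), Real.sqrt_sq hy.le]
    have h3 : Real.sqrt y ≤ 1 / Real.sqrt E := by
      rw [← Real.sqrt_one, ← Real.sqrt_div (by norm_num)]
      exact Real.sqrt_le_sqrt h1
    rw [h2, hW, ← one_div_mul_one_div]
    gcongr
  rw [hyE] at e3 ⊢
  have e5 : Real.sqrt (y ^ 3) * Real.exp E ≤ Real.exp E / W := by
    calc _ ≤ 1 / W * Real.exp E := by gcongr
      _ = _ := by ring
  linarith

/-- **(Kim–Lee.)** As `n → ∞`,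
`p_σ(n+1) = (2π/(n√23)) · I₂(4π√n/√23) + O(n^{−1/2} · I₂(2π√n/√23))`. -/
theorem kim_lee_asymptotics_pSigma :
    (fun n : ℕ =>
        (pSigma (n + 1) : ℝ) -
          2 * Real.pi / ((n : ℝ) * Real.sqrt 23) * I2 (4 * Real.pi * Real.sqrt n / Real.sqrt 23))
      =O[atTop]
    (fun n : ℕ => (n : ℝ) ^ (-(1 : ℝ) / 2) * I2 (2 * Real.pi * Real.sqrt n / Real.sqrt 23)) := by
  obtain ⟨C1, hC1, h1⟩ := kl_err
  obtain ⟨C2, hC2, h2⟩ := kl_final_real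
  obtain ⟨c, hc, h3⟩ := kl_I2_lower
  have hpi := Real.pi_pos
  have h23 : 0 < Real.sqrt 23 := by positivity
  have hs23 : Real.sqrt 23 * Real.sqrt 23 = 23 := Real.mul_self_sqrt (by norm_num)
  have hlim : Tendsto (fun n : ℕ => Real.pi / Real.sqrt 23 * Real.sqrt n) atTop atTop := by
    apply Tendsto.const_mul_atTop (by positivity)
    exact Real.tendsto_sqrt_atTop.comp tendsto_natCast_atTop_atTop
  have hlim2 : Tendsto (fun n : ℕ => 2 * (Real.pi / Real.sqrt 23 * Real.sqrt n)) atTop atTop :=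
    hlim.const_mul_atTop (by norm_num)
  set B : ℝ := c * (Real.pi / Real.sqrt 23) / Real.sqrt 2 with hB
  have hB0 : 0 < B := by positivity
  apply IsBigO.of_bound (C1 * C2 / B)
  filter_upwards [hlim.eventually h2, hlim2.eventually h3, eventually_ge_atTop 1] with n hn2 hn3 hn
  have hnR : (1 : ℝ) ≤ n := by exact_mod_cast hn
  set r := Real.sqrt n with hr
  have hr1 : 1 ≤ r := by rw [hr, Real.one_le_sqrt]; exact hnR
  have hr0 : 0 < r := by linarith
  have hrr : (n : ℝ) = r * r := (Real.mul_self_sqrt (by linarith)).symm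
  set E := Real.pi / Real.sqrt 23 * r with hE
  have hE0 : 0 < E := by positivity
  set y : ℝ := 1 / (2 * Real.sqrt 23 * r) with hy
  have hy0 : 0 < y := by positivity
  have hs1 : 1 ≤ Real.sqrt 23 := by rw [Real.one_le_sqrt]; norm_num
  have hy1 : y ≤ 1 := by
    rw [hy, div_le_one (by positivity)]; nlinarith
  have hyE : Real.pi / 46 * (1 / y) = E := by
    rw [hy, one_div_one_div, hE]
    field_simp
    rw [pow_two, hs23]; norm_num
  have hnE : 2 * Real.pi * n * y = E := by
    rw [hy, hE, hrr]; field_simp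
  have k1 := h1 n hn y hy0 hy1
  have k2 := hn2 y hy0 hyE
  rw [hnE] at k1
  have harg : 2 * Real.pi * r / Real.sqrt 23 = 2 * E := by rw [hE]; ring
  have hrp : (n : ℝ) ^ (-(1 : ℝ) / 2) = 1 / r := by
    rw [neg_div, Real.rpow_neg (by linarith), ← Real.sqrt_eq_rpow, one_div]
  rw [harg, hrp, Real.norm_eq_abs]
  have hlow : B * (Real.exp (2 * E) / (E * Real.sqrt E)) ≤ 1 / r * I2 (2 * E) := by
    have h4 : 1 / r * (c * (Real.exp (2 * E) / Real.sqrt (2 * E))) ≤ 1 / r * I2 (2 * E) := by gcongr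
    refine le_trans (le_of_eq ?_) h4
    rw [Real.sqrt_mul (by norm_num) E]
    have : 1 / r = Real.pi / Real.sqrt 23 / E := by rw [hE]; field_simp
    rw [this, hB]
    field_simp
  refine k1.trans ?_
  calc _ ≤ C1 * Real.exp E * (C2 * (Real.exp E / (E * Real.sqrt E))) := by gcongr
    _ = C1 * C2 / B * (B * (Real.exp (2 * E) / (E * Real.sqrt E))) := by
      rw [two_mul E, Real.exp_add]; field_simp
    _ ≤ C1 * C2 / B * (1 / r * I2 (2 * E)) := by gcongr
    _ ≤ _ := by gcongr; exact le_abs_self _
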